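/- arXiv:2106.11734 — 2 statements merged into one kernel-verified Lean document; each statement's English description precedes it below -/
import Mathlib

section
/- If a locally integrable function f on the open unit disc satisfies the BWMO condition (i.e. ‖f‖_BWMO < ∞), then the average function f̂ belongs to BO, i.e. sup_{z∈𝔻} sup_{w∈D(z,1)} |f̂(z) − f̂(w)| < ∞. -/
open MeasureTheory Set

noncomputable section

/-- The normalized area measure on the plane: planar Lebesgue measure divided by `π`. -/
def dA : Measure ℂ := (ENNReal.ofReal Real.pi)⁻¹ • volume

/-- The open unit disc `𝔻`. -/
def unitDisc : Set ℂ := {z : ℂ | ‖z‖ < 1}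

/-- The argument `θ` of `z`, normalized to lie in `[0, 2π)`. -/
def theta (z : ℂ) : ℝ := toIcoMod Real.two_pi_pos 0 (Complex.arg z)

/-- The angle of `ζ`, normalized to lie in `[theta z, theta z + 2π)`;
for `ζ ∈ B(z)` this is the angle `θ̃ ∈ [θ, θ + π(1-r)]` of the paper's convention. -/
def angFrom (z ζ : ℂ) : ℝ := toIcoMod Real.two_pi_pos (theta z) (Complex.arg ζ)

/-- The polar rectangle `{ρ e^{iφ} : r₁ ≤ ρ ≤ r₂, φ₁ ≤ φ ≤ φ₂}`. -/
def polarRect (r₁ r₂ φ₁ φ₂ : ℝ) : Set ℂ :=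
  {w : ℂ | ∃ ρ φ : ℝ, r₁ ≤ ρ ∧ ρ ≤ r₂ ∧ φ₁ ≤ φ ∧ φ ≤ φ₂ ∧
    w = (ρ : ℂ) * Complex.exp ((φ : ℂ) * Complex.I)}

/-- The set `B(z)` for `z = r e^{iθ} ∈ 𝔻`. -/
def Bz (z : ℂ) : Set ℂ :=
  polarRect ‖z‖ (1 - (1 - ‖z‖) / 2) (theta z) (theta z + Real.pi * (1 - ‖z‖))

/-- The set `B(z, ζ)` for `ζ ∈ B(z)`. -/
def Bzz (z ζ : ℂ) : Set ℂ := polarRect ‖z‖ ‖ζ‖ (theta z) (angFrom z ζ)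

/-- The set `B(ζ₁, ζ₂)` for points `ζ₁ ≾ ζ₂` of `B(z)`. -/
def Bsub (z ζ₁ ζ₂ : ℂ) : Set ℂ := polarRect ‖ζ₁‖ ‖ζ₂‖ (angFrom z ζ₁) (angFrom z ζ₂)

/-- The relation `ζ₁ ≾ ζ₂` for points of `B(z)`: `ρ₁ ≤ ρ₂` and `φ₁ ≤ φ₂`. -/
def precSim (z ζ₁ ζ₂ : ℂ) : Prop := ‖ζ₁‖ ≤ ‖ζ₂‖ ∧ angFrom z ζ₁ ≤ angFrom z ζ₂

/-- The average `f̂_K = (1/|K|) ∫_K f dA` of `f` over a set `K`. -/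
def avgOn (f : ℂ → ℂ) (K : Set ℂ) : ℂ := ((dA K).toReal)⁻¹ • ∫ w in K, f w ∂dA

/-- The average function `f̂(z) = f̂_{B(z)}`. -/
def avg (f : ℂ → ℂ) (z : ℂ) : ℂ := avgOn f (Bz z)

/-- The quantity `(1/|B(z)|) |∫_{B(z,ζ)} (f(ξ) - f̂(z)) dA(ξ)|`. -/
def wQuot (f : ℂ → ℂ) (z ζ : ℂ) : ℝ :=
  ((dA (Bz z)).toReal)⁻¹ * ‖∫ ξ in Bzz z ζ, (f ξ - avg f z) ∂dA‖

/-- The BWMO condition: `‖f‖_BWMO < ∞`. -/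
def IsBWMO (f : ℂ → ℂ) : Prop := ∃ C : ℝ, ∀ z ∈ unitDisc, ∀ ζ ∈ Bz z, wQuot f z ζ ≤ C

/-- The BWMO seminorm `‖f‖_BWMO`. -/
def bwmoNorm (f : ℂ → ℂ) : ℝ :=
  sSup {c : ℝ | ∃ z ∈ unitDisc, ∃ ζ ∈ Bz z, c = wQuot f z ζ}

/-- The VWMO condition:
`(1/|B(z)|) sup_{ζ ∈ B(z)} |∫_{B(z,ζ)} (f - f̂(z)) dA| → 0` as `|z| → 1`. -/
def IsVWMO (f : ℂ → ℂ) : Prop :=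
  ∀ ε > (0:ℝ), ∃ r₀ < (1:ℝ), ∀ z ∈ unitDisc, r₀ ≤ ‖z‖ → ∀ ζ ∈ Bz z, wQuot f z ζ ≤ ε

/-- The Bergman-metric disc `D(z,1)` of radius `1` centered at `z`. -/
def Dball (z : ℂ) : Set ℂ :=
  {w : ℂ | ‖w‖ < 1 ∧ ‖(z - w) / (1 - (starRingEnd ℂ) w * z)‖ < Real.tanh 1}

/-- The hyperbolic average `f̂₁(z) = (1/|D(z,1)|) ∫_{D(z,1)} f dA` of a real-valued `f`. -/
def avg1 (f : ℂ → ℝ) (z : ℂ) : ℝ := ((dA (Dball z)).toReal)⁻¹ * ∫ w in Dball z, f w ∂dA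

/-- The mean oscillation `(1/|D(z,1)|) ∫_{D(z,1)} |f - f̂₁(z)| dA` of a real-valued `f`. -/
def meanOsc1 (f : ℂ → ℝ) (z : ℂ) : ℝ :=
  ((dA (Dball z)).toReal)⁻¹ * ∫ ξ in Dball z, |f ξ - avg1 f z| ∂dA

/-- The Berezin transform `f̃(z) = ∫_𝔻 f(w) |k_z(w)|² dA(w)`,
where `k_z(w) = (1-|z|²)/(1-w z̄)²`. -/
def berezin (f : ℂ → ℂ) (z : ℂ) : ℂ :=
  ∫ w in unitDisc, f w * ((((1 - ‖z‖ ^ 2) ^ 2 / ‖1 - w * (starRingEnd ℂ) z‖ ^ 4 : ℝ)) : ℂ) ∂dA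

/-- The example symbol of Section 4:
`f(r e^{iθ}) = (1/(r (1-r)^{b-β})) sin(1/(1-r)^b)` for `r ≥ 1/2`, and `1` for `r < 1/2`. -/
def fEx (b β : ℝ) (z : ℂ) : ℝ :=
  if ‖z‖ < 1 / 2 then 1
  else (1 / (‖z‖ * (1 - ‖z‖) ^ (b - β))) * Real.sin (1 / (1 - ‖z‖) ^ b)

end


namespace BW

lemma polar_norm {ρ φ : ℝ} (h : 0 ≤ ρ) : ‖(ρ : ℂ) * Complex.exp ((φ : ℂ) * Complex.I)‖ = ρ := by
  rw [norm_mul, Complex.norm_exp_ofReal_mul_I, mul_one, Complex.norm_real, Real.norm_of_nonneg h]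

lemma polar_inj_mod {ρ φ ρ' φ' : ℝ} (h : 0 < ρ) (h' : 0 ≤ ρ')
    (he : (ρ : ℂ) * Complex.exp ((φ : ℂ) * Complex.I) =
      (ρ' : ℂ) * Complex.exp ((φ' : ℂ) * Complex.I)) :
    ρ = ρ' ∧ ∃ n : ℤ, φ = φ' + n * (2 * Real.pi) := by
  have h1 : ρ = ρ' := by
    rw [← polar_norm (φ := φ) h.le, he, polar_norm h']
  refine ⟨h1, ?_⟩
  subst h1
  have h2 := mul_left_cancel₀ (by exact_mod_cast h.ne') he
  obtain ⟨n, hn⟩ := Complex.exp_eq_exp_iff_exists_int.1 h2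
  refine ⟨n, ?_⟩
  have := congrArg Complex.im hn
  simpa using this

lemma int_zero_of {n : ℤ} {a b : ℝ} (h : a = b + n * (2 * Real.pi)) (hab : |a - b| < 2 * Real.pi) :
    n = 0 := by
  have h1 : a - b = n * (2 * Real.pi) := by linarith
  rw [h1, abs_mul, abs_of_pos Real.two_pi_pos] at hab
  have h2 : |(n : ℝ)| < 1 := by
    by_contra hc
    push Not at hc
    nlinarith [Real.two_pi_pos]
  have h3 : |n| < 1 := by exact_mod_cast h2
  exact Int.abs_lt_one_iff.1 h3

lemma polar_inj {ρ φ ρ' φ' : ℝ} (h : 0 < ρ) (h' : 0 ≤ ρ')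
    (he : (ρ : ℂ) * Complex.exp ((φ : ℂ) * Complex.I) =
      (ρ' : ℂ) * Complex.exp ((φ' : ℂ) * Complex.I)) (hφ : |φ - φ'| < 2 * Real.pi) :
    ρ = ρ' ∧ φ = φ' := by
  obtain ⟨h1, n, hn⟩ := polar_inj_mod h h' he
  have := int_zero_of hn hφ
  subst this
  exact ⟨h1, by simpa using hn⟩

lemma polarRect_compact (a b c d : ℝ) : IsCompact (polarRect a b c d) := by
  have : polarRect a b c d = (fun p : ℝ × ℝ => (p.1 : ℂ) * Complex.exp ((p.2 : ℂ) * Complex.I)) ''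
      (Icc a b ×ˢ Icc c d) := by
    ext w
    constructor
    · rintro ⟨ρ, φ, h1, h2, h3, h4, rfl⟩
      exact ⟨(ρ, φ), ⟨⟨h1, h2⟩, ⟨h3, h4⟩⟩, rfl⟩
    · rintro ⟨⟨ρ, φ⟩, ⟨⟨h1, h2⟩, ⟨h3, h4⟩⟩, rfl⟩
      exact ⟨ρ, φ, h1, h2, h3, h4, rfl⟩
  rw [this]
  apply (isCompact_Icc.prod isCompact_Icc).image
  fun_prop

lemma polarRect_subset {a b c d : ℝ} (ha : 0 ≤ a) (hb : b < 1) : polarRect a b c d ⊆ unitDisc := by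
  rintro w ⟨ρ, φ, h1, h2, h3, h4, rfl⟩
  show ‖_‖ < 1
  rw [polar_norm (ha.trans h1)]
  linarith

lemma polarRect_mono {a b c d a' b' c' d' : ℝ} (h1 : a ≤ a') (h2 : b' ≤ b) (h3 : c ≤ c')
    (h4 : d' ≤ d) : polarRect a' b' c' d' ⊆ polarRect a b c d := by
  rintro w ⟨ρ, φ, g1, g2, g3, g4, rfl⟩
  exact ⟨ρ, φ, by linarith, by linarith, by linarith, by linarith, rfl⟩

lemma polarRect_period (a b c d : ℝ) (n : ℤ) :
    polarRect a b (c + n * (2 * Real.pi)) (d + n * (2 * Real.pi)) = polarRect a b c d := by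
  have key : ∀ (φ : ℝ) (m : ℤ), Complex.exp (((φ + m * (2 * Real.pi) : ℝ) : ℂ) * Complex.I) =
      Complex.exp ((φ : ℂ) * Complex.I) := by
    intro φ m
    rw [Complex.exp_eq_exp_iff_exists_int]
    exact ⟨m, by push_cast; ring⟩
  ext w
  constructor
  · rintro ⟨ρ, φ, g1, g2, g3, g4, rfl⟩
    refine ⟨ρ, φ + ((-n : ℤ) : ℝ) * (2 * Real.pi), g1, g2, ?_, ?_, ?_⟩
    · push_cast; linarith
    · push_cast; linarith
    · rw [key]
  · rintro ⟨ρ, φ, g1, g2, g3, g4, rfl⟩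
    exact ⟨ρ, φ + n * (2 * Real.pi), g1, g2, by linarith, by linarith, by rw [key]⟩

lemma dA_null {s : Set ℂ} (h : volume s = 0) : dA s = 0 := by
  simp [dA, h]

lemma dA_toReal (s : Set ℂ) : (dA s).toReal = Real.pi⁻¹ * (volume s).toReal := by
  simp [dA, ENNReal.toReal_ofReal Real.pi_pos.le]

lemma dA_compact {s : Set ℂ} (h : IsCompact s) : dA s < ⊤ := by
  have : volume s < ⊤ := h.measure_lt_top
  simp only [dA, Measure.smul_apply, smul_eq_mul]
  exact ENNReal.mul_lt_top (by simp [Real.pi_pos]) this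

lemma line_null (φ : ℝ) : volume {w : ℂ | ∃ ρ : ℝ, w = (ρ : ℂ) * Complex.exp ((φ : ℂ) * Complex.I)} = 0 := by
  have hne : (Submodule.span ℝ {Complex.exp ((φ : ℂ) * Complex.I)} : Submodule ℝ ℂ) ≠ ⊤ := by
    intro h
    have h1 := finrank_span_singleton (K := ℝ) (Complex.exp_ne_zero ((φ : ℂ) * Complex.I))
    rw [h, finrank_top, Complex.finrank_real_complex] at h1
    norm_num at h1
  refine measure_mono_null ?_ (Measure.addHaar_submodule volume _ hne)
  rintro w ⟨ρ, rfl⟩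
  exact Submodule.mem_span_singleton.2 ⟨ρ, by simp⟩

lemma split_rad {g : ℂ → ℂ} {a b c θ φ : ℝ} (ha : 0 ≤ a) (hab : a ≤ b) (hbc : b ≤ c)
    (hg : IntegrableOn g (polarRect a c θ φ) dA) :
    ∫ w in polarRect a c θ φ, g w ∂dA = ∫ w in polarRect a b θ φ, g w ∂dA +
      ∫ w in polarRect b c θ φ, g w ∂dA := by
  have hu : polarRect a c θ φ = polarRect a b θ φ ∪ polarRect b c θ φ := by
    ext w
    constructor
    · rintro ⟨ρ, ψ, g1, g2, g3, g4, rfl⟩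
      rcases le_total ρ b with h | h
      · exact Or.inl ⟨ρ, ψ, g1, h, g3, g4, rfl⟩
      · exact Or.inr ⟨ρ, ψ, h, g2, g3, g4, rfl⟩
    · rintro (h | h)
      · exact polarRect_mono le_rfl hbc le_rfl le_rfl h
      · exact polarRect_mono hab le_rfl le_rfl le_rfl h
  have h1 := hg.mono_set (polarRect_mono le_rfl hbc le_rfl le_rfl : polarRect a b θ φ ⊆ _)
  have h2 := hg.mono_set (polarRect_mono hab le_rfl le_rfl le_rfl : polarRect b c θ φ ⊆ _)
  rw [hu]
  refine setIntegral_union₀ ?_ (polarRect_compact _ _ _ _).measurableSet.nullMeasurableSet h1 h2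
  apply dA_null
  refine measure_mono_null ?_ (Measure.addHaar_sphere volume (0 : ℂ) b)
  rintro w ⟨⟨ρ, ψ, g1, g2, g3, g4, rfl⟩, ⟨ρ', ψ', g1', g2', g3', g4', he⟩⟩
  have n1 : ‖(ρ : ℂ) * Complex.exp ((ψ : ℂ) * Complex.I)‖ = ρ := polar_norm (by linarith)
  have n2 := congrArg norm he
  rw [polar_norm (by linarith), polar_norm (by linarith)] at n2
  rw [mem_sphere_zero_iff_norm, n1]
  linarith

lemma split_ang {g : ℂ → ℂ} {a b θ φ ψ : ℝ} (ha : 0 ≤ a) (h1 : θ ≤ φ) (h2 : φ ≤ ψ)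
    (h3 : ψ - θ < 2 * Real.pi)
    (hg : IntegrableOn g (polarRect a b θ ψ) dA) :
    ∫ w in polarRect a b θ ψ, g w ∂dA = ∫ w in polarRect a b θ φ, g w ∂dA +
      ∫ w in polarRect a b φ ψ, g w ∂dA := by
  have hu : polarRect a b θ ψ = polarRect a b θ φ ∪ polarRect a b φ ψ := by
    ext w
    constructor
    · rintro ⟨ρ, t, g1, g2, g3, g4, rfl⟩
      rcases le_total t φ with h | h
      · exact Or.inl ⟨ρ, t, g1, g2, g3, h, rfl⟩
      · exact Or.inr ⟨ρ, t, g1, g2, h, g4, rfl⟩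
    · rintro (h | h)
      · exact polarRect_mono le_rfl le_rfl le_rfl h2 h
      · exact polarRect_mono le_rfl le_rfl h1 le_rfl h
  have i1 := hg.mono_set (polarRect_mono le_rfl le_rfl le_rfl h2 : polarRect a b θ φ ⊆ _)
  have i2 := hg.mono_set (polarRect_mono le_rfl le_rfl h1 le_rfl : polarRect a b φ ψ ⊆ _)
  rw [hu]
  refine setIntegral_union₀ ?_ (polarRect_compact _ _ _ _).measurableSet.nullMeasurableSet i1 i2
  apply dA_null
  refine measure_mono_null ?_ (line_null φ)
  rintro w ⟨⟨ρ, t, g1, g2, g3, g4, rfl⟩, ⟨ρ', t', g1', g2', g3', g4', he⟩⟩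
  rcases (ha.trans g1).eq_or_lt with h | h
  · exact ⟨0, by simp [← h]⟩
  · obtain ⟨_, e⟩ := polar_inj h (by linarith) he (by rw [abs_lt]; constructor <;> linarith)
    have : t = φ := by linarith
    exact ⟨ρ, by rw [this]⟩

lemma area_centered {a b δ : ℝ} (ha : 0 ≤ a) (hab : a ≤ b) (hδ : 0 ≤ δ) (hδ' : δ < Real.pi) :
    (volume (polarRect a b (-δ) δ)).toReal = (b ^ 2 - a ^ 2) * δ := by
  have hm := (polarRect_compact a b (-δ) δ).measurableSet
  have h0 := Complex.integral_comp_polarCoord_symm ((polarRect a b (-δ) δ).indicator (1 : ℂ → ℝ))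
  rw [integral_indicator_one hm] at h0
  rw [← measureReal_def, ← h0]
  have hS : MeasurableSet (Icc a b ×ˢ Icc (-δ) δ) := measurableSet_Icc.prod measurableSet_Icc
  have e1 : ∫ p in polarCoord.target, p.1 • (polarRect a b (-δ) δ).indicator (1 : ℂ → ℝ)
      (Complex.polarCoord.symm p) =
      ∫ p in polarCoord.target, (Icc a b ×ˢ Icc (-δ) δ).indicator (fun p : ℝ × ℝ => p.1 * 1) p := by
    refine setIntegral_congr_fun polarCoord.open_target.measurableSet (fun p hp => ?_)
    obtain ⟨hp1, hp2, hp3⟩ := hp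
    have hp1 : 0 < p.1 := hp1
    have he : Complex.polarCoord.symm p = (p.1 : ℂ) * Complex.exp ((p.2 : ℂ) * Complex.I) := by
      rw [Complex.polarCoord_symm_apply, Complex.exp_mul_I]; push_cast; rfl
    have : Complex.polarCoord.symm p ∈ polarRect a b (-δ) δ ↔ p ∈ (Icc a b ×ˢ Icc (-δ) δ) := by
      rw [he]
      constructor
      · rintro ⟨ρ, t, g1, g2, g3, g4, e⟩
        obtain ⟨e1, e2⟩ := polar_inj hp1 (by linarith) e
          (by rw [abs_lt]; constructor <;> linarith)
        rw [← e1] at g1 g2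
        rw [← e2] at g3 g4
        exact ⟨⟨g1, g2⟩, ⟨g3, g4⟩⟩
      · rintro ⟨⟨g1, g2⟩, ⟨g3, g4⟩⟩
        exact ⟨p.1, p.2, g1, g2, g3, g4, rfl⟩
    by_cases hc : p ∈ (Icc a b ×ˢ Icc (-δ) δ)
    · simp only [indicator_of_mem hc, indicator_of_mem (this.2 hc)]; simp
    · simp only [indicator_of_notMem hc, indicator_of_notMem (fun h => hc (this.1 h))]; simp
  rw [e1, setIntegral_indicator hS]
  have e2 : polarCoord.target ∩ (Icc a b ×ˢ Icc (-δ) δ) = (Ioi 0 ∩ Icc a b) ×ˢ Icc (-δ) δ := by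
    ext p
    simp only [polarCoord, mem_inter_iff, mem_prod, mem_Ioi, mem_Ioo, mem_Icc]
    constructor
    · tauto
    · rintro ⟨⟨h1, h2, h3⟩, h4, h5⟩
      exact ⟨⟨h1, by linarith, by linarith⟩, ⟨h2, h3⟩, h4, h5⟩
  rw [e2, Measure.volume_eq_prod, setIntegral_prod_mul (fun x : ℝ => x) (fun _ : ℝ => (1:ℝ))]
  have e3 : ∫ x in Ioi 0 ∩ Icc a b, x = ∫ x in Icc a b, x := by
    apply setIntegral_congr_set
    have : (Ioi 0 ∩ Icc a b : Set ℝ) =ᵐ[volume] (Ici 0 ∩ Icc a b : Set ℝ) :=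
      Filter.EventuallyEq.inter Ioi_ae_eq_Ici (Filter.EventuallyEq.refl _ _)
    have hsub : Icc a b ⊆ Ici (0 : ℝ) := fun x hx => ha.trans hx.1
    rwa [inter_eq_right.2 hsub] at this
  rw [e3, integral_Icc_eq_integral_Ioc, ← intervalIntegral.integral_of_le hab, integral_id,
    integral_Icc_eq_integral_Ioc, ← intervalIntegral.integral_of_le (by linarith)]
  simp
  ring

lemma area {a b c d : ℝ} (ha : 0 ≤ a) (hab : a ≤ b) (hcd : c ≤ d) (hcd' : d - c < 2 * Real.pi) :
    (dA (polarRect a b c d)).toReal = (b ^ 2 - a ^ 2) * (d - c) / (2 * Real.pi) := by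
  have h1 := area_centered (δ := (d - c) / 2) ha hab (by linarith) (by linarith)
  have h2 : volume (polarRect a b (-((d - c) / 2)) ((d - c) / 2)) = volume (polarRect a b c d) := by
    have hmp := (rotation (Circle.exp ((c + d) / 2))).measurePreserving
    rw [← hmp.measure_preimage (polarRect_compact a b c d).measurableSet.nullMeasurableSet]
    congr 1
    ext w
    rw [mem_preimage, rotation_apply, Circle.coe_exp]
    have key : ∀ (ρ t s : ℝ), Complex.exp ((s : ℂ) * Complex.I) *
        ((ρ : ℂ) * Complex.exp ((t : ℂ) * Complex.I)) =
        (ρ : ℂ) * Complex.exp (((s + t : ℝ) : ℂ) * Complex.I) := by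
      intro ρ t s
      push_cast
      rw [add_mul, Complex.exp_add]; ring
    constructor
    · rintro ⟨ρ, t, g1, g2, g3, g4, rfl⟩
      exact ⟨ρ, (c + d) / 2 + t, g1, g2, by linarith, by linarith, key _ _ _⟩
    · rintro ⟨ρ, t, g1, g2, g3, g4, he⟩
      refine ⟨ρ, -((c + d) / 2) + t, g1, g2, by linarith, by linarith, ?_⟩
      rw [← key, ← he, ← mul_assoc, ← Complex.exp_add]
      simp
  rw [dA_toReal, ← h2, h1]
  field_simp

def BB (r θ : ℝ) : Set ℂ := polarRect r (1 - (1 - r) / 2) θ (θ + Real.pi * (1 - r))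

noncomputable def av (f : ℂ → ℂ) (r θ : ℝ) : ℂ := avgOn f (BB r θ)

def Good (f : ℂ → ℂ) (C r θ : ℝ) : Prop :=
  ∀ ρ φ : ℝ, r ≤ ρ → ρ ≤ 1 - (1 - r) / 2 → θ ≤ φ → φ ≤ θ + Real.pi * (1 - r) →
    ‖∫ ξ in polarRect r ρ θ φ, (f ξ - av f r θ) ∂dA‖ ≤ C * (dA (BB r θ)).toReal

lemma BB_period (r θ : ℝ) (n : ℤ) : BB r (θ + n * (2 * Real.pi)) = BB r θ := by
  unfold BB
  rw [show θ + n * (2 * Real.pi) + Real.pi * (1 - r) =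
    (θ + Real.pi * (1 - r)) + n * (2 * Real.pi) by ring, polarRect_period]

lemma av_period (f : ℂ → ℂ) (r θ : ℝ) (n : ℤ) : av f r (θ + n * (2 * Real.pi)) = av f r θ := by
  rw [av, BB_period, av]

lemma Good.period {f : ℂ → ℂ} {C r θ : ℝ} (h : Good f C r θ) (n : ℤ) :
    Good f C r (θ + n * (2 * Real.pi)) := by
  intro ρ φ h1 h2 h3 h4
  have := h ρ (φ - n * (2 * Real.pi)) h1 h2 (by linarith) (by linarith)
  rw [av_period, BB_period]
  rw [← polarRect_period r ρ θ (φ - n * (2 * Real.pi)) n, sub_add_cancel] at this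
  exact this

lemma toIcoMod_polar (a : ℝ) (z : ℂ) : z = (‖z‖ : ℂ) *
    Complex.exp (((toIcoMod Real.two_pi_pos a (Complex.arg z) : ℝ) : ℂ) * Complex.I) := by
  conv_lhs => rw [← Complex.norm_mul_exp_arg_mul_I z]
  congr 1
  rw [Complex.exp_eq_exp_iff_exists_int]
  refine ⟨toIcoDiv Real.two_pi_pos a (Complex.arg z), ?_⟩
  have := toIcoMod_add_toIcoDiv_zsmul Real.two_pi_pos a (Complex.arg z)
  conv_lhs => rw [← this]
  simp only [zsmul_eq_mul]
  push_cast
  ring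

lemma theta_polar (z : ℂ) : z = (‖z‖ : ℂ) * Complex.exp ((theta z : ℂ) * Complex.I) :=
  toIcoMod_polar _ _

lemma area_BB {r θ : ℝ} (h0 : 0 ≤ r) (h1 : r < 1) :
    (dA (BB r θ)).toReal = ((1 - (1 - r) / 2) ^ 2 - r ^ 2) * (1 - r) / 2 := by
  have hp := Real.pi_pos
  unfold BB
  rw [area h0 (by linarith) (by nlinarith) (by nlinarith)]
  field_simp
  ring

lemma area_BB_pos {r θ : ℝ} (h0 : 0 ≤ r) (h1 : r < 1) : 0 < (dA (BB r θ)).toReal := by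
  rw [area_BB h0 h1]
  have : (1 - (1 - r) / 2) ^ 2 - r ^ 2 = (1 - r) / 2 * ((1 + 3 * r) / 2) := by ring
  rw [this]
  have : 0 < 1 - r := by linarith
  positivity

lemma good_z {f : ℂ → ℂ} {C : ℝ} (hC : ∀ z ∈ unitDisc, ∀ ζ ∈ Bz z, wQuot f z ζ ≤ C) (hC0 : 0 ≤ C)
    {z : ℂ} (hz : z ∈ unitDisc) : Good f C ‖z‖ (theta z) := by
  intro ρ φ h1 h2 h3 h4
  have hz' : ‖z‖ < 1 := hz
  have hp := Real.pi_pos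
  have hA : 0 < (dA (BB ‖z‖ (theta z))).toReal := area_BB_pos (norm_nonneg z) hz'
  rcases ((norm_nonneg z).trans h1).eq_or_lt with h | h
  · have : dA (polarRect ‖z‖ ρ (theta z) φ) = 0 := by
      apply dA_null
      refine measure_mono_null ?_ (line_null 0)
      rintro w ⟨ρ', φ', g1, g2, g3, g4, rfl⟩
      have : ρ' = 0 := by linarith [norm_nonneg z]
      exact ⟨0, by simp [this]⟩
    rw [setIntegral_measure_zero _ this, norm_zero]
    positivity
  · set ζ : ℂ := (ρ : ℂ) * Complex.exp ((φ : ℂ) * Complex.I) with hζ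
    have hmem : ζ ∈ Bz z := ⟨ρ, φ, h1, h2, h3, h4, rfl⟩
    have hn : ‖ζ‖ = ρ := polar_norm h.le
    have hang : angFrom z ζ = φ := by
      have hp1 : ζ = (‖ζ‖ : ℂ) * Complex.exp ((angFrom z ζ : ℂ) * Complex.I) := toIcoMod_polar _ _
      rw [hn] at hp1
      have hI := toIcoMod_mem_Ico Real.two_pi_pos (theta z) (Complex.arg ζ)
      change angFrom z ζ ∈ _ at hI
      have := norm_nonneg z
      refine (polar_inj h h.le hp1 ?_).2.symm
      rw [abs_lt]
      constructor <;> nlinarith [hI.1, hI.2]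
    have := hC z hz ζ hmem
    unfold wQuot Bzz at this
    rw [hn, hang] at this
    change (((dA (BB ‖z‖ (theta z))).toReal)⁻¹ *
      ‖∫ ξ in polarRect ‖z‖ ρ (theta z) φ, (f ξ - av f ‖z‖ (theta z)) ∂dA‖ ≤ C) at this
    rwa [inv_mul_le_iff₀ hA, mul_comm] at this

lemma good_pos {f : ℂ → ℂ} {C : ℝ} (hC : ∀ z ∈ unitDisc, ∀ ζ ∈ Bz z, wQuot f z ζ ≤ C) (hC0 : 0 ≤ C)
    {r θ : ℝ} (h0 : 0 < r) (h1 : r < 1) : Good f C r θ := by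
  set z : ℂ := (r : ℂ) * Complex.exp ((θ : ℂ) * Complex.I) with hz
  have hn : ‖z‖ = r := polar_norm h0.le
  have hzD : z ∈ unitDisc := by show ‖z‖ < 1; rw [hn]; exact h1
  have hg := good_z hC hC0 hzD
  have ht := theta_polar z
  rw [hn] at ht hg
  obtain ⟨_, n, hn⟩ := polar_inj_mod h0 h0.le ht
  rw [hn]
  exact hg.period n

lemma rect_est {f : ℂ → ℂ} (hf : LocallyIntegrableOn f unitDisc dA) {C r θ : ℝ} (h0 : 0 ≤ r)
    (h1 : r < 1) (hg : Good f C r θ) {a b c d : ℝ} (ha : r ≤ a) (hab : a ≤ b)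
    (hb : b ≤ 1 - (1 - r) / 2) (hc : θ ≤ c) (hcd : c ≤ d) (hd : d ≤ θ + Real.pi * (1 - r)) :
    ‖(∫ ξ in polarRect a b c d, f ξ ∂dA) - (dA (polarRect a b c d)).toReal • av f r θ‖ ≤
      4 * (C * (dA (BB r θ)).toReal) := by
  have hp := Real.pi_pos
  have hfi : ∀ a b c d : ℝ, 0 ≤ a → b < 1 → IntegrableOn f (polarRect a b c d) dA := fun a b c d h h' =>
    hf.integrableOn_compact_subset (polarRect_subset h h') (polarRect_compact _ _ _ _)
  have hci : ∀ a b c d : ℝ, IntegrableOn (fun _ => av f r θ) (polarRect a b c d) dA := fun a b c d =>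
    integrableOn_const (dA_compact (polarRect_compact _ _ _ _)).ne
  have hgi : ∀ a b c d : ℝ, 0 ≤ a → b < 1 → IntegrableOn (fun ξ => f ξ - av f r θ)
    (polarRect a b c d) dA := fun a b c d h h' => (hfi a b c d h h').sub (hci a b c d)
  have e0 : (∫ ξ in polarRect a b c d, f ξ ∂dA) - (dA (polarRect a b c d)).toReal • av f r θ =
      ∫ ξ in polarRect a b c d, (f ξ - av f r θ) ∂dA := by
    rw [integral_sub (hfi _ _ _ _ (by linarith) (by linarith)) (hci _ _ _ _), setIntegral_const]
    rfl
  rw [e0]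
  have hL : Real.pi * (1 - r) ≤ Real.pi := by nlinarith
  have e1 := split_rad (g := fun ξ => f ξ - av f r θ) (θ := c) (φ := d) h0 ha hab
    (hgi _ _ _ _ h0 (by linarith))
  have e2 := split_ang (g := fun ξ => f ξ - av f r θ) (a := r) (b := b) (θ := θ) (φ := c) (ψ := d)
    h0 hc hcd (by linarith) (hgi _ _ _ _ h0 (by linarith))
  have e3 := split_ang (g := fun ξ => f ξ - av f r θ) (a := r) (b := a) (θ := θ) (φ := c) (ψ := d)
    h0 hc hcd (by linarith) (hgi _ _ _ _ h0 (by linarith))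
  have b1 := hg b d (by linarith) hb (by linarith) hd
  have b2 := hg b c (by linarith) hb (by linarith) (by linarith)
  have b3 := hg a d (by linarith) (by linarith) (by linarith) hd
  have b4 := hg a c (by linarith) (by linarith) (by linarith) (by linarith)
  generalize (∫ ξ in polarRect a b c d, (f ξ - av f r θ) ∂dA) = x at *
  generalize (∫ ξ in polarRect r b θ d, (f ξ - av f r θ) ∂dA) = x1 at *
  generalize (∫ ξ in polarRect r b θ c, (f ξ - av f r θ) ∂dA) = x2 at *
  generalize (∫ ξ in polarRect r a θ d, (f ξ - av f r θ) ∂dA) = x3 at *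
  generalize (∫ ξ in polarRect r a θ c, (f ξ - av f r θ) ∂dA) = x4 at *
  have : x = (x1 - x2) - (x3 - x4) := by
    rw [e2, e3, add_sub_cancel_left, add_sub_cancel_left, e1, add_sub_cancel_left]
  rw [this]
  have t1 := norm_sub_le (x1 - x2) (x3 - x4)
  have t2 := norm_sub_le x1 x2
  have t3 := norm_sub_le x3 x4
  linarith

/-- comparison of two averages via a common large sub-rectangle -/
lemma compare {f : ℂ → ℂ} (hf : LocallyIntegrableOn f unitDisc dA) {C r θ s η κ : ℝ} (hC0 : 0 ≤ C)
    (hr0 : 0 ≤ r) (hr1 : r < 1) (hs0 : 0 ≤ s) (hs1 : s < 1)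
    (hg : Good f C r θ) (hg' : Good f C s η) {a b c d : ℝ} (hab : a ≤ b) (hcd : c ≤ d)
    (ha : r ≤ a) (hb : b ≤ 1 - (1 - r) / 2) (hc : θ ≤ c) (hd : d ≤ θ + Real.pi * (1 - r))
    (ha' : s ≤ a) (hb' : b ≤ 1 - (1 - s) / 2) (hc' : η ≤ c) (hd' : d ≤ η + Real.pi * (1 - s))
    (hκ : 0 < κ) (k1 : (dA (BB r θ)).toReal ≤ κ * (dA (polarRect a b c d)).toReal)
    (k2 : (dA (BB s η)).toReal ≤ κ * (dA (polarRect a b c d)).toReal) :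
    ‖av f r θ - av f s η‖ ≤ 8 * C * κ := by
  have m1 := rect_est hf hr0 hr1 hg ha hab hb hc hcd hd
  have m2 := rect_est hf hs0 hs1 hg' ha' hab hb' hc' hcd hd'
  have p1 := area_BB_pos (θ := θ) hr0 hr1
  set M := (dA (polarRect a b c d)).toReal
  have hM : 0 < M := by
    by_contra hcon
    push Not at hcon
    nlinarith
  have t := norm_sub_le ((∫ ξ in polarRect a b c d, f ξ ∂dA) - M • av f s η)
    ((∫ ξ in polarRect a b c d, f ξ ∂dA) - M • av f r θ)
  rw [sub_sub_sub_cancel_left, ← smul_sub, norm_smul, Real.norm_of_nonneg hM.le] at t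
  have q1 := mul_le_mul_of_nonneg_left k1 hC0
  have q2 := mul_le_mul_of_nonneg_left k2 hC0
  have : M * ‖av f r θ - av f s η‖ ≤ M * (8 * C * κ) := by linarith
  exact le_of_mul_le_mul_left this hM

lemma ang_step {f : ℂ → ℂ} (hf : LocallyIntegrableOn f unitDisc dA) {C r θ η : ℝ} (hC0 : 0 ≤ C)
    (hr0 : 0 ≤ r) (hr1 : r < 1) (hg : Good f C r θ) (hg' : Good f C r η)
    (h1 : θ ≤ η) (h2 : η ≤ θ + Real.pi * (1 - r) / 2) :
    ‖av f r θ - av f r η‖ ≤ 32 * C := by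
  have hp := Real.pi_pos
  have h3 : 0 < Real.pi * (1 - r) := mul_pos hp (by linarith)
  have h4 : Real.pi * (1 - r) ≤ Real.pi := by nlinarith
  have hK : (dA (polarRect r (1 - (1 - r) / 2) η (η + Real.pi * (1 - r) / 2))).toReal =
      ((1 - (1 - r) / 2) ^ 2 - r ^ 2) * (1 - r) / 2 / 2 := by
    rw [area hr0 (by linarith) (by linarith) (by linarith)]
    field_simp
    ring
  have hpos := area_BB_pos (θ := θ) hr0 hr1
  rw [area_BB hr0 hr1] at hpos
  have hlow : ((1 - (1 - r) / 2) ^ 2 - r ^ 2) * (1 - r) / 2 ≤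
      4 * (((1 - (1 - r) / 2) ^ 2 - r ^ 2) * (1 - r) / 2 / 2) := by linarith
  have := compare (a := r) (b := 1 - (1 - r) / 2) (c := η) (d := θ + Real.pi * (1 - r)) (κ := 4) hf hC0
    hr0 hr1 hr0 hr1 hg hg' (by linarith) (by linarith) le_rfl le_rfl h1 (by linarith)
    le_rfl le_rfl le_rfl (by linarith) (by norm_num)
  refine (this ?_ ?_).trans (by linarith)
  all_goals
    rw [area_BB hr0 hr1]
    refine hlow.trans ?_
    rw [← hK]
    have : (dA (polarRect r (1 - (1 - r) / 2) η (η + Real.pi * (1 - r) / 2))).toReal ≤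
      (dA (polarRect r (1 - (1 - r) / 2) η (θ + Real.pi * (1 - r)))).toReal :=
      ENNReal.toReal_mono (dA_compact (polarRect_compact _ _ _ _)).ne
        (measure_mono (polarRect_mono le_rfl le_rfl le_rfl (by linarith)))
    linarith

lemma rad_step {f : ℂ → ℂ} (hf : LocallyIntegrableOn f unitDisc dA) {C r s θ : ℝ} (hC0 : 0 ≤ C)
    (hr0 : 0 ≤ r) (hrs : r ≤ s) (hs : 3 / 4 * (1 - r) ≤ 1 - s) (hr1 : r < 1)
    (hg : Good f C r θ) (hg' : Good f C s θ) :
    ‖av f r θ - av f s θ‖ ≤ 256 * C := by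
  have hp := Real.pi_pos
  have hs1 : s < 1 := by linarith
  have h3 : 0 < Real.pi * (1 - s) := mul_pos hp (by linarith)
  have h4 : Real.pi * (1 - s) ≤ Real.pi * (1 - r) := by nlinarith
  have h5 : Real.pi * (1 - s) ≤ Real.pi := by nlinarith
  have hK : (dA (polarRect s (1 - (1 - r) / 2) θ (θ + Real.pi * (1 - s)))).toReal =
      ((1 - (1 - r) / 2) ^ 2 - s ^ 2) * (1 - s) / 2 := by
    rw [area (by linarith) (by linarith) (by linarith) (by linarith)]
    field_simp
    ring
  have := compare (a := s) (b := 1 - (1 - r) / 2) (c := θ) (d := θ + Real.pi * (1 - s)) (κ := 32)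
    hf hC0 hr0 hr1 (by linarith) hs1 hg hg' (by linarith) (by linarith) hrs le_rfl le_rfl
    (by linarith) le_rfl (by linarith) le_rfl le_rfl (by norm_num)
  have g0 : (1 - r) / 4 ≤ 1 - (1 - r) / 2 - s := by linarith
  have u0 : 0 < 1 - r := by linarith
  have u1 : 0 < 1 - s := by linarith
  have g1 : (1 - r) / 4 * (1 / 2) ≤ (1 - (1 - r) / 2) ^ 2 - s ^ 2 := by
    have : (1 - (1 - r) / 2) ^ 2 - s ^ 2 = (1 - (1 - r) / 2 - s) * ((1 + r) / 2 + s) := by ring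
    rw [this]
    apply mul_le_mul g0 (by linarith) (by norm_num) (by linarith)
  have g2 : (1 - r) / 4 * (1 / 2) * (3 / 4 * (1 - r)) ≤ ((1 - (1 - r) / 2) ^ 2 - s ^ 2) * (1 - s) :=
    mul_le_mul g1 hs (by linarith) (le_trans (by positivity) g1)
  have g3 : ∀ x, r ≤ x → x < 1 → ((1 - (1 - x) / 2) ^ 2 - x ^ 2) * (1 - x) ≤ (1 - r) * (1 - r) := by
    intro x hx hx1
    have e : (1 - (1 - x) / 2) ^ 2 - x ^ 2 = (1 - x) * ((1 + 3 * x) / 4) := by ring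
    have e2 : (1 - (1 - x) / 2) ^ 2 - x ^ 2 ≤ 1 - r := by rw [e]; nlinarith
    exact mul_le_mul e2 (by linarith) (by linarith) u0.le
  refine (this ?_ ?_).trans (by linarith)
  · rw [area_BB hr0 hr1, hK]
    nlinarith [g3 r le_rfl hr1]
  · rw [area_BB (by linarith) hs1, hK]
    nlinarith [g3 s hrs hs1]

lemma rad_chain {f : ℂ → ℂ} (hf : LocallyIntegrableOn f unitDisc dA) {C : ℝ}
    (hC : ∀ z ∈ unitDisc, ∀ ζ ∈ Bz z, wQuot f z ζ ≤ C) (hC0 : 0 ≤ C) {s θ : ℝ}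
    (hs1 : s < 1) (hg' : Good f C s θ) (N : ℕ) :
    ∀ r : ℝ, 0 ≤ r → r ≤ s → (3 / 4 : ℝ) ^ N * (1 - r) ≤ 1 - s → Good f C r θ →
      ‖av f r θ - av f s θ‖ ≤ N * (256 * C) := by
  induction N with
  | zero =>
    intro r h0 h1 h2 _
    have : r = s := by simp at h2; linarith
    simp [this]
  | succ N ih =>
    intro r h0 h1 h2 hg
    have hr1 : r < 1 := by linarith
    rcases le_total (3 / 4 * (1 - r)) (1 - s) with h | h
    · have := rad_step hf hC0 h0 h1 h hr1 hg hg'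
      push_cast
      have hN : (0 : ℝ) ≤ N := Nat.cast_nonneg N
      nlinarith [mul_nonneg hN hC0]
    · have hpos : 0 < 1 - 3 / 4 * (1 - r) := by linarith
      have hgm : Good f C (1 - 3 / 4 * (1 - r)) θ := good_pos hC hC0 hpos (by linarith)
      have t1 := ih (1 - 3 / 4 * (1 - r)) hpos.le (by linarith)
        (by rw [pow_succ] at h2; linarith) hgm
      have t2 := rad_step (s := 1 - 3 / 4 * (1 - r)) hf hC0 h0 (by linarith) (by linarith) hr1 hg hgm
      have t3 := norm_sub_le_norm_sub_add_norm_sub (av f r θ) (av f (1 - 3 / 4 * (1 - r)) θ) (av f s θ)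
      push_cast
      linarith

lemma ang_chain {f : ℂ → ℂ} (hf : LocallyIntegrableOn f unitDisc dA) {C : ℝ}
    (hC : ∀ z ∈ unitDisc, ∀ ζ ∈ Bz z, wQuot f z ζ ≤ C) (hC0 : 0 ≤ C) {r η : ℝ}
    (hr0 : 0 < r) (hr1 : r < 1) (N : ℕ) :
    ∀ θ : ℝ, θ ≤ η → η ≤ θ + N * (Real.pi * (1 - r) / 2) →
      ‖av f r θ - av f r η‖ ≤ N * (32 * C) := by
  induction N with
  | zero =>
    intro θ h1 h2
    have : θ = η := by simp at h2; linarith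
    simp [this]
  | succ N ih =>
    intro θ h1 h2
    have hg : ∀ θ, Good f C r θ := fun θ => good_pos hC hC0 hr0 hr1
    rcases le_total η (θ + Real.pi * (1 - r) / 2) with h | h
    · have := ang_step hf hC0 hr0.le hr1 (hg θ) (hg η) h1 h
      push_cast
      have hN : (0 : ℝ) ≤ N := Nat.cast_nonneg N
      nlinarith [mul_nonneg hN hC0]
    · have hpos : 0 < Real.pi * (1 - r) / 2 := by
        have := mul_pos Real.pi_pos (sub_pos.2 hr1)
        linarith
      have t1 := ih (θ + Real.pi * (1 - r) / 2) h (by push_cast at h2; linarith)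
      have t2 := ang_step (η := θ + Real.pi * (1 - r) / 2) hf hC0 hr0.le hr1 (hg _) (hg _)
        (by linarith) le_rfl
      have t3 := norm_sub_le_norm_sub_add_norm_sub (av f r θ) (av f r (θ + Real.pi * (1 - r) / 2))
        (av f r η)
      push_cast
      linarith

lemma ang_chain' {f : ℂ → ℂ} (hf : LocallyIntegrableOn f unitDisc dA) {C : ℝ}
    (hC : ∀ z ∈ unitDisc, ∀ ζ ∈ Bz z, wQuot f z ζ ≤ C) (hC0 : 0 ≤ C) {r η θ : ℝ}
    (hr0 : 0 < r) (hr1 : r < 1) (N : ℕ) (h : |θ - η| ≤ N * (Real.pi * (1 - r) / 2)) :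
      ‖av f r θ - av f r η‖ ≤ N * (32 * C) := by
  rw [abs_le] at h
  rcases le_total θ η with h1 | h1
  · exact ang_chain hf hC hC0 hr0 hr1 N θ h1 (by linarith)
  · rw [norm_sub_rev]
    exact ang_chain hf hC hC0 hr0 hr1 N η h1 (by linarith)

/-- The pseudohyperbolic inequality in polar form. -/
def PH (r s α β : ℝ) : Prop :=
  r ^ 2 + s ^ 2 - 2 * r * s * Real.cos (α - β) ≤
    Real.tanh 1 ^ 2 * (1 - 2 * r * s * Real.cos (α - β) + (r * s) ^ 2)

lemma PH.symm {r s α β : ℝ} (h : PH r s α β) : PH s r β α := by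
  unfold PH at *
  rw [← Real.cos_neg, neg_sub]
  nlinarith [h]

lemma re_im_polar {z : ℂ} {r α : ℝ} (h : z = (r : ℂ) * Complex.exp ((α : ℂ) * Complex.I)) :
    z.re = r * Real.cos α ∧ z.im = r * Real.sin α := by
  rw [h, Complex.re_ofReal_mul, Complex.im_ofReal_mul, Complex.exp_ofReal_mul_I_re,
    Complex.exp_ofReal_mul_I_im]
  exact ⟨rfl, rfl⟩

lemma PH_of_mem {z w : ℂ} (hz : z ∈ unitDisc) (hw : w ∈ Dball z) :
    PH ‖z‖ ‖w‖ (theta z) (theta w) := by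
  obtain ⟨hw1, hw2⟩ := hw
  have hz1 : ‖z‖ < 1 := hz
  have hne : 1 - (starRingEnd ℂ) w * z ≠ 0 := by
    intro h
    have h1 : (starRingEnd ℂ) w * z = 1 := (sub_eq_zero.1 h).symm
    have h2 := congrArg norm h1
    rw [norm_mul, RCLike.norm_conj, norm_one] at h2
    nlinarith [norm_nonneg z, norm_nonneg w]
  rw [norm_div, div_lt_iff₀ (norm_pos_iff.2 hne)] at hw2
  have hsq : ‖z - w‖ ^ 2 ≤ Real.tanh 1 ^ 2 * ‖1 - (starRingEnd ℂ) w * z‖ ^ 2 := by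
    rw [← mul_pow]
    exact pow_le_pow_left₀ (norm_nonneg _) hw2.le 2
  obtain ⟨a1, a2⟩ := re_im_polar (theta_polar z)
  obtain ⟨b1, b2⟩ := re_im_polar (theta_polar w)
  have c1 := Real.sin_sq_add_cos_sq (theta z)
  have c2 := Real.sin_sq_add_cos_sq (theta w)
  have e1 : ‖z - w‖ ^ 2 = ‖z‖ ^ 2 + ‖w‖ ^ 2 - 2 * ‖z‖ * ‖w‖ * Real.cos (theta z - theta w) := by
    rw [← Complex.normSq_eq_norm_sq, Complex.normSq_apply, Complex.sub_re, Complex.sub_im,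
      a1, a2, b1, b2, Real.cos_sub]
    linear_combination ‖z‖ ^ 2 * c1 + ‖w‖ ^ 2 * c2
  have e2 : ‖1 - (starRingEnd ℂ) w * z‖ ^ 2 =
      1 - 2 * ‖z‖ * ‖w‖ * Real.cos (theta z - theta w) + (‖z‖ * ‖w‖) ^ 2 := by
    rw [← Complex.normSq_eq_norm_sq, Complex.normSq_apply]
    simp only [Complex.sub_re, Complex.sub_im, Complex.mul_re, Complex.mul_im, Complex.conj_re,
      Complex.conj_im, Complex.one_re, Complex.one_im]
    rw [a1, a2, b1, b2, Real.cos_sub]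
    linear_combination ‖z‖ ^ 2 * ‖w‖ ^ 2 * ((Real.sin (theta w) ^ 2 + Real.cos (theta w) ^ 2) * c1 + c2)
  unfold PH
  rw [← e1, ← e2]
  exact hsq

lemma geom {r s α β κ : ℝ} (hκ : κ = 1 - Real.tanh 1 ^ 2) (hr0 : 0 ≤ r) (hrs : r ≤ s) (hs1 : s < 1)
    (h : PH r s α β) :
    κ / 4 * (1 - r) ≤ 1 - s ∧
    ∃ n : ℤ, |α - (β + n * (2 * Real.pi))| ≤ (16 / κ) * (Real.pi * (1 - s) / 2) := by
  have hp := Real.pi_pos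
  have hκ0 : 0 < κ := by rw [hκ]; linarith [Real.tanh_sq_lt_one 1]
  have hκ1 : κ ≤ 1 := by rw [hκ]; linarith [sq_nonneg (Real.tanh 1)]
  set c := Real.cos (α - β) with hc
  have hc1 : c ≤ 1 := Real.cos_le_one _
  have hrs0 : 0 ≤ r * s := mul_nonneg hr0 (by linarith)
  have hr1 : r < 1 := by linarith
  have k1 : κ * (1 - 2 * r * s * c + (r * s) ^ 2) ≤ (1 - r ^ 2) * (1 - s ^ 2) := by
    unfold PH at h
    rw [← hc] at h
    rw [hκ]
    linarith
  have k2 : (1 - r ^ 2) * (1 - s ^ 2) ≤ 4 * ((1 - r) * (1 - s)) := by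
    have : (1 - r ^ 2) * (1 - s ^ 2) = ((1 - r) * (1 - s)) * ((1 + r) * (1 + s)) := by ring
    rw [this, mul_comm 4]
    apply mul_le_mul_of_nonneg_left _ (mul_nonneg (by linarith) (by linarith))
    nlinarith
  have k3 : κ * (1 - r) ^ 2 ≤ 4 * ((1 - r) * (1 - s)) := by
    refine le_trans ?_ (k1.trans k2)
    apply mul_le_mul_of_nonneg_left _ hκ0.le
    have : (1 - r) ^ 2 ≤ (1 - r * s) ^ 2 := by
      apply pow_le_pow_left₀ (by linarith)
      nlinarith
    nlinarith
  have k4 : κ / 4 * (1 - r) ≤ 1 - s := by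
    have : (1 - r) * (κ * (1 - r)) ≤ (1 - r) * (4 * (1 - s)) := by linarith
    have := le_of_mul_le_mul_left this (by linarith)
    linarith
  refine ⟨k4, round ((α - β) / (2 * Real.pi)), ?_⟩
  set n := round ((α - β) / (2 * Real.pi)) with hn
  have hy : |α - (β + n * (2 * Real.pi))| ≤ Real.pi := by
    have h1 := abs_sub_round ((α - β) / (2 * Real.pi))
    rw [← hn] at h1
    have h2 : α - (β + n * (2 * Real.pi)) = ((α - β) / (2 * Real.pi) - n) * (2 * Real.pi) := by
      field_simp
      ring
    rw [h2, abs_mul, abs_of_pos Real.two_pi_pos]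
    nlinarith
  set y := α - (β + n * (2 * Real.pi)) with hydef
  have hcy : c = 1 - 2 * Real.sin (y / 2) ^ 2 := by
    have h1 : c = Real.cos y := by
      rw [hc, hydef, ← sub_sub, Real.cos_sub_int_mul_two_pi]
    have h2 : Real.cos y = Real.cos (2 * (y / 2)) := by congr 1; ring
    rw [h1, h2, Real.cos_two_mul, Real.cos_sq']
    ring
  rcases le_total r (1 / 2) with hr | hr
  · refine hy.trans ?_
    have : κ / 8 ≤ 1 - s := by nlinarith
    have h2 : (16 / κ) * (Real.pi * (κ / 8) / 2) = Real.pi := by field_simp; norm_num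
    refine h2.symm.le.trans ?_
    gcongr
  · have hrs4 : 1 / 4 ≤ r * s := by nlinarith
    have m1 : κ * Real.sin (y / 2) ^ 2 ≤ 4 * ((1 - r) * (1 - s)) := by
      refine le_trans ?_ (k1.trans k2)
      apply mul_le_mul_of_nonneg_left _ hκ0.le
      rw [hcy]
      nlinarith [sq_nonneg (1 - r * s), sq_nonneg (Real.sin (y / 2))]
    have m2 : (κ * Real.sin (y / 2)) ^ 2 ≤ (4 * (1 - s)) ^ 2 := by
      have : (κ * Real.sin (y / 2)) ^ 2 = κ * (κ * Real.sin (y / 2) ^ 2) := by ring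
      rw [this]
      have h1 := mul_le_mul_of_nonneg_left m1 hκ0.le
      have h2 := mul_le_mul_of_nonneg_right k4 (by linarith : (0:ℝ) ≤ 1 - s)
      nlinarith
    have m3 : κ * |Real.sin (y / 2)| ≤ 4 * (1 - s) := by
      have := abs_le_of_sq_le_sq m2 (by linarith)
      rwa [abs_mul, abs_of_pos hκ0] at this
    have m4 := Real.mul_abs_le_abs_sin (x := y / 2)
      (by rw [abs_div, abs_of_pos (two_pos : (0:ℝ) < 2)]; linarith)
    rw [abs_div, abs_of_pos (two_pos : (0:ℝ) < 2)] at m4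
    have m5 : κ * |y| ≤ 4 * Real.pi * (1 - s) := by
      have : |y| ≤ Real.pi * |Real.sin (y / 2)| := by
        have e : 2 / Real.pi * (|y| / 2) = |y| / Real.pi := by field_simp
        rw [e, div_le_iff₀ hp] at m4
        linarith
      have h1 := mul_le_mul_of_nonneg_left this hκ0.le
      have h2 := mul_le_mul_of_nonneg_left m3 hp.le
      nlinarith
    have e : (16 / κ) * (Real.pi * (1 - s) / 2) = 8 * Real.pi * (1 - s) / κ := by field_simp; ring
    rw [e, le_div_iff₀ hκ0]
    have := mul_pos hp (by linarith : 0 < 1 - s)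
    linarith

lemma core {f : ℂ → ℂ} (hf : LocallyIntegrableOn f unitDisc dA) {C κ : ℝ}
    (hC : ∀ z ∈ unitDisc, ∀ ζ ∈ Bz z, wQuot f z ζ ≤ C) (hC0 : 0 ≤ C)
    (hκ : κ = 1 - Real.tanh 1 ^ 2) {M N : ℕ} (hM : (3 / 4 : ℝ) ^ M ≤ κ / 4) (hN : 16 / κ ≤ N)
    {z w : ℂ} (hz : z ∈ unitDisc) (hw : w ∈ unitDisc) (hzw : ‖z‖ ≤ ‖w‖)
    (h : PH ‖z‖ ‖w‖ (theta z) (theta w)) :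
    ‖avg f z - avg f w‖ ≤ M * (256 * C) + N * (32 * C) := by
  have hw1 : ‖w‖ < 1 := hw
  rcases (norm_nonneg w).eq_or_lt with h0 | h0
  · have e1 : w = 0 := norm_eq_zero.1 h0.symm
    have e2 : z = 0 := norm_eq_zero.1 (le_antisymm (by linarith) (norm_nonneg z))
    rw [e1, e2, sub_self, norm_zero]
    positivity
  · obtain ⟨g1, n, g2⟩ := geom hκ (norm_nonneg z) hzw hw1 h
    have hg : ∀ θ, Good f C ‖w‖ θ := fun θ => good_pos hC hC0 h0 hw1
    have t1 := rad_chain hf hC hC0 hw1 (hg (theta z)) M ‖z‖ (norm_nonneg z) hzw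
      ((mul_le_mul_of_nonneg_right hM (by linarith)).trans g1) (good_z hC hC0 hz)
    have hpp : 0 ≤ Real.pi * (1 - ‖w‖) / 2 := by
      have := mul_pos Real.pi_pos (sub_pos.2 hw1)
      linarith
    have t2 := ang_chain' hf hC hC0 h0 hw1 N (g2.trans (mul_le_mul_of_nonneg_right hN hpp))
    rw [av_period] at t2
    have t3 := norm_sub_le_norm_sub_add_norm_sub (av f ‖z‖ (theta z)) (av f ‖w‖ (theta z))
      (av f ‖w‖ (theta w))
    change ‖av f ‖z‖ (theta z) - av f ‖w‖ (theta w)‖ ≤ _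
    linarith

end BW

/-- If a locally integrable `f` on `𝔻` satisfies the BWMO condition, then
the average function `f̂` is of bounded oscillation:
`sup_{z∈𝔻} sup_{w∈D(z,1)} |f̂(z) - f̂(w)| < ∞`. -/
theorem bwmo_avg_mem_BO (f : ℂ → ℂ) (hf : MeasureTheory.LocallyIntegrableOn f unitDisc dA)
    (hbwmo : IsBWMO f) :
    ∃ C : ℝ, ∀ z ∈ unitDisc, ∀ w ∈ Dball z, ‖avg f z - avg f w‖ ≤ C := by
  obtain ⟨C, hC⟩ := hbwmo
  have hC' : ∀ z ∈ unitDisc, ∀ ζ ∈ Bz z, wQuot f z ζ ≤ |C| :=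
    fun z hz ζ hζ => (hC z hz ζ hζ).trans (le_abs_self C)
  have hκ0 : 0 < 1 - Real.tanh 1 ^ 2 := by linarith [Real.tanh_sq_lt_one 1]
  obtain ⟨M, hM⟩ := exists_pow_lt_of_lt_one (by linarith : 0 < (1 - Real.tanh 1 ^ 2) / 4)
    (by norm_num : (3 / 4 : ℝ) < 1)
  obtain ⟨N, hN⟩ := exists_nat_ge (16 / (1 - Real.tanh 1 ^ 2))
  refine ⟨M * (256 * |C|) + N * (32 * |C|), fun z hz w hw => ?_⟩
  have hwD : w ∈ unitDisc := hw.1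
  have hPH := BW.PH_of_mem hz hw
  rcases le_total ‖z‖ ‖w‖ with h | h
  · exact BW.core hf hC' (abs_nonneg C) rfl hM.le hN hz hwD h hPH
  · rw [norm_sub_rev]
    exact BW.core hf hC' (abs_nonneg C) rfl hM.le hN hwD hz h hPH.symm
end

section
/- If a locally integrable function f on the open unit disc satisfies the VWMO condition, then the average function f̂ belongs to VO, i.e. sup_{w∈D(z,1)} |f̂(z) − f̂(w)| → 0 as |z| → 1. -/
open MeasureTheory Set

section VWMOproof

open Complex

lemma polarRect_eq_image (a b s t : ℝ) : polarRect a b s t =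
    Set.image (fun p : ℝ × ℝ => (p.1 : ℂ) * Complex.exp ((p.2 : ℂ) * Complex.I))
      (Icc a b ×ˢ Icc s t) := by
  ext w
  constructor
  · rintro ⟨ρ, φ, h1, h2, h3, h4, rfl⟩
    exact ⟨(ρ, φ), ⟨⟨h1, h2⟩, ⟨h3, h4⟩⟩, rfl⟩
  · rintro ⟨⟨ρ, φ⟩, ⟨⟨h1, h2⟩, ⟨h3, h4⟩⟩, rfl⟩
    exact ⟨ρ, φ, h1, h2, h3, h4, rfl⟩

lemma isCompact_polarRect (a b s t : ℝ) : IsCompact (polarRect a b s t) := by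
  rw [polarRect_eq_image]
  apply (isCompact_Icc.prod isCompact_Icc).image
  fun_prop

lemma norm_polar {ρ : ℝ} (h : 0 ≤ ρ) (φ : ℝ) :
    ‖(ρ : ℂ) * Complex.exp ((φ : ℂ) * Complex.I)‖ = ρ := by
  rw [norm_mul, Complex.norm_exp_ofReal_mul_I, mul_one, Complex.norm_real, Real.norm_of_nonneg h]

lemma exp_add_int (φ : ℝ) (k : ℤ) :
    Complex.exp (((φ + k * (2 * Real.pi) : ℝ) : ℂ) * Complex.I)
      = Complex.exp ((φ : ℂ) * Complex.I) := by
  rw [Complex.exp_eq_exp_iff_exists_int]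
  exact ⟨k, by push_cast; ring⟩

lemma polar_exp_inj {φ ψ : ℝ} (h : Complex.exp ((φ : ℂ) * Complex.I)
    = Complex.exp ((ψ : ℂ) * Complex.I)) : ∃ k : ℤ, φ = ψ + k * (2 * Real.pi) := by
  rw [Complex.exp_eq_exp_iff_exists_int] at h
  obtain ⟨k, hk⟩ := h
  refine ⟨k, ?_⟩
  have := congrArg Complex.im hk
  simpa using this

lemma polar_inj {ρ ρ' φ ψ : ℝ} (h0 : 0 < ρ) (h1 : 0 < ρ')
    (h : (ρ : ℂ) * Complex.exp ((φ : ℂ) * Complex.I)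
    = (ρ' : ℂ) * Complex.exp ((ψ : ℂ) * Complex.I)) :
    ρ = ρ' ∧ ∃ k : ℤ, φ = ψ + k * (2 * Real.pi) := by
  have hn := congrArg norm h
  rw [norm_polar h0.le, norm_polar h1.le] at hn
  refine ⟨hn, polar_exp_inj ?_⟩
  rw [← hn] at h
  exact mul_left_cancel₀ (by exact_mod_cast h0.ne') h

lemma polarRect_shift (a b s t : ℝ) (k : ℤ) :
    polarRect a b (s + k * (2 * Real.pi)) (t + k * (2 * Real.pi)) = polarRect a b s t := by
  ext w
  constructor
  · rintro ⟨ρ, φ, h1, h2, h3, h4, rfl⟩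
    refine ⟨ρ, φ - k * (2 * Real.pi), h1, h2, by linarith, by linarith, ?_⟩
    rw [← exp_add_int (φ - k * (2 * Real.pi)) k, sub_add_cancel]
  · rintro ⟨ρ, φ, h1, h2, h3, h4, rfl⟩
    refine ⟨ρ, φ + k * (2 * Real.pi), h1, h2, by linarith, by linarith, ?_⟩
    rw [exp_add_int _ k]

lemma polarRect_mono {a b s t a' b' s' t' : ℝ} (h1 : a' ≤ a) (h2 : b ≤ b') (h3 : s' ≤ s)
    (h4 : t ≤ t') : polarRect a b s t ⊆ polarRect a' b' s' t' := by
  rintro w ⟨ρ, φ, g1, g2, g3, g4, rfl⟩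
  exact ⟨ρ, φ, h1.trans g1, g2.trans h2, h3.trans g3, g4.trans h4, rfl⟩

lemma dA_null {s : Set ℂ} (h : volume s = 0) : dA s = 0 := by
  simp [dA, h]

lemma aedisj_radial {a b c s t : ℝ} (ha : 0 ≤ a) (hab : a ≤ b) :
    AEDisjoint dA (polarRect a b s t) (polarRect b c s t) := by
  apply dA_null
  apply measure_mono_null (t := Metric.sphere (0:ℂ) b)
  · rintro w ⟨⟨ρ, φ, g1, g2, g3, g4, rfl⟩, ⟨ρ', φ', g1', g2', g3', g4', h⟩⟩
    have hn := congrArg norm h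
    rw [norm_polar (by linarith), norm_polar (by linarith)] at hn
    rw [mem_sphere_zero_iff_norm, norm_polar (by linarith)]
    linarith
  · exact Measure.addHaar_sphere _ _ _

lemma aedisj_ang {a b s t u : ℝ} (ha : 0 < a) (hst : s ≤ t) (htu : t ≤ u)
    (hu : u < s + 2 * Real.pi) :
    AEDisjoint dA (polarRect a b s t) (polarRect a b t u) := by
  apply dA_null
  apply measure_mono_null (t := ((ℝ ∙ Complex.exp ((t : ℂ) * Complex.I) : Submodule ℝ ℂ) : Set ℂ))
  · rintro w ⟨⟨ρ, φ, g1, g2, g3, g4, rfl⟩, ⟨ρ', φ', g1', g2', g3', g4', h⟩⟩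
    obtain ⟨-, k, hk⟩ := polar_inj (by linarith) (by linarith) h
    have hp := Real.pi_pos
    have hk0 : k = 0 := by
      have h1 : (-1 : ℝ) < k := by nlinarith
      have h2 : (k : ℝ) < 1 := by nlinarith
      have h1' : (-1 : ℤ) < k := by exact_mod_cast h1
      have h2' : k < 1 := by exact_mod_cast h2
      omega
    have : φ = t := by
      rw [hk0] at hk; simp at hk; linarith
    rw [this]
    exact Submodule.mem_span_singleton.2 ⟨ρ, by simp⟩
  · apply Measure.addHaar_submodule
    intro htop
    have := finrank_span_singleton (K := ℝ) (Complex.exp_ne_zero ((t : ℂ) * Complex.I))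
    rw [htop, finrank_top, Complex.finrank_real_complex] at this
    norm_num at this

lemma union_radial {a b c s t : ℝ} (hab : a ≤ b) (hbc : b ≤ c) :
    polarRect a b s t ∪ polarRect b c s t = polarRect a c s t := by
  apply Subset.antisymm
  · exact union_subset (polarRect_mono le_rfl hbc le_rfl le_rfl)
      (polarRect_mono hab le_rfl le_rfl le_rfl)
  · rintro w ⟨ρ, φ, g1, g2, g3, g4, rfl⟩
    rcases le_total ρ b with h | h
    · exact Or.inl ⟨ρ, φ, g1, h, g3, g4, rfl⟩
    · exact Or.inr ⟨ρ, φ, h, g2, g3, g4, rfl⟩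

lemma union_ang {a b s t u : ℝ} (hab : s ≤ t) (hbc : t ≤ u) :
    polarRect a b s t ∪ polarRect a b t u = polarRect a b s u := by
  apply Subset.antisymm
  · exact union_subset (polarRect_mono le_rfl le_rfl le_rfl hbc)
      (polarRect_mono le_rfl le_rfl hab le_rfl)
  · rintro w ⟨ρ, φ, g1, g2, g3, g4, rfl⟩
    rcases le_total φ t with h | h
    · exact Or.inl ⟨ρ, φ, g1, g2, g3, h, rfl⟩
    · exact Or.inr ⟨ρ, φ, g1, g2, h, g4, rfl⟩

lemma meas_polarRect (a b s t : ℝ) : MeasurableSet (polarRect a b s t) :=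
  (isCompact_polarRect a b s t).isClosed.measurableSet

lemma int_radial {g : ℂ → ℂ} {a b c s t : ℝ} (ha : 0 ≤ a) (hab : a ≤ b) (hbc : b ≤ c)
    (hg : IntegrableOn g (polarRect a c s t) dA) :
    ∫ w in polarRect a c s t, g w ∂dA
      = ∫ w in polarRect a b s t, g w ∂dA + ∫ w in polarRect b c s t, g w ∂dA := by
  rw [← union_radial hab hbc] at hg ⊢
  exact setIntegral_union₀ (aedisj_radial ha hab) (meas_polarRect _ _ _ _).nullMeasurableSet
    hg.left_of_union hg.right_of_union

lemma int_ang {g : ℂ → ℂ} {a b s t u : ℝ} (ha : 0 < a) (hst : s ≤ t) (htu : t ≤ u)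
    (hu : u < s + 2 * Real.pi)
    (hg : IntegrableOn g (polarRect a b s u) dA) :
    ∫ w in polarRect a b s u, g w ∂dA
      = ∫ w in polarRect a b s t, g w ∂dA + ∫ w in polarRect a b t u, g w ∂dA := by
  rw [← union_ang hst htu] at hg ⊢
  exact setIntegral_union₀ (aedisj_ang ha hst htu hu) (meas_polarRect _ _ _ _).nullMeasurableSet
    hg.left_of_union hg.right_of_union

lemma vol_polarRect_aux {a b s t : ℝ} (ha : 0 < a) (hab : a ≤ b) (hs : -Real.pi < s) (hst : s ≤ t)
    (ht : t < Real.pi) :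
    (volume (polarRect a b s t)).toReal = (b ^ 2 - a ^ 2) / 2 * (t - s) := by
  have h1 := Complex.integral_comp_polarCoord_symm (Set.indicator (polarRect a b s t) (fun _ => (1:ℝ)))
  rw [integral_indicator (meas_polarRect _ _ _ _)] at h1
  simp only [integral_const, smul_eq_mul, mul_one, measureReal_restrict_apply_univ] at h1
  rw [← measureReal_def, ← h1]
  have h2 : ∀ p ∈ polarCoord.target, p.1 * (polarRect a b s t).indicator (fun _ => (1:ℝ))
      (Complex.polarCoord.symm p) = (Icc a b ×ˢ Icc s t).indicator (fun p => p.1 * (1:ℝ)) p := by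
    rintro ⟨ρ, φ⟩ hp
    rw [polarCoord_target] at hp
    obtain ⟨hρ, hφ⟩ := hp
    simp only [mem_Ioi, mem_Ioo] at hρ hφ
    have hiff : Complex.polarCoord.symm (ρ, φ) ∈ polarRect a b s t ↔ (ρ, φ) ∈ Icc a b ×ˢ Icc s t := by
      have he : Complex.polarCoord.symm (ρ, φ) = (ρ : ℂ) * Complex.exp ((φ : ℂ) * Complex.I) := by
        rw [Complex.polarCoord_symm_apply, Complex.exp_mul_I]; simp
      rw [he]
      constructor
      · rintro ⟨ρ', φ', g1, g2, g3, g4, h⟩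
        obtain ⟨e, k, hk⟩ := polar_inj hρ (by linarith) h
        have hp := Real.pi_pos
        have hk0 : k = 0 := by
          have h1 : (-1 : ℝ) < k := by nlinarith
          have h2 : (k : ℝ) < 1 := by nlinarith
          have h1' : (-1 : ℤ) < k := by exact_mod_cast h1
          have h2' : k < 1 := by exact_mod_cast h2
          omega
        have : φ = φ' := by
          rw [hk0] at hk; simpa using hk
        subst this; subst e
        exact ⟨⟨g1, g2⟩, ⟨g3, g4⟩⟩
      · rintro ⟨⟨g1, g2⟩, ⟨g3, g4⟩⟩
        exact ⟨ρ, φ, g1, g2, g3, g4, rfl⟩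
    by_cases hm : (ρ, φ) ∈ Icc a b ×ˢ Icc s t
    · rw [indicator_of_mem hm, indicator_of_mem (hiff.2 hm)]
    · rw [indicator_of_notMem hm, indicator_of_notMem (fun h => hm (hiff.1 h))]; simp
  rw [setIntegral_congr_fun polarCoord.open_target.measurableSet h2,
    setIntegral_indicator (measurableSet_Icc.prod measurableSet_Icc)]
  have h3 : polarCoord.target ∩ Icc a b ×ˢ Icc s t = Icc a b ×ˢ Icc s t := by
    apply inter_eq_right.2
    rintro ⟨ρ, φ⟩ ⟨⟨g1, g2⟩, ⟨g3, g4⟩⟩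
    rw [polarCoord_target]
    simp only at g1 g2 g3 g4
    exact ⟨by simp only [mem_Ioi]; linarith, by simp only [mem_Ioo]; constructor <;> linarith⟩
  rw [h3, Measure.volume_eq_prod, setIntegral_prod_mul (fun x : ℝ => x) (fun _ => (1:ℝ))]
  rw [integral_Icc_eq_integral_Ioc, ← intervalIntegral.integral_of_le hab, integral_id]
  simp [hst]

lemma vol_polarRect_rot (a b s t m : ℝ) :
    volume (polarRect a b (s + m) (t + m)) = volume (polarRect a b s t) := by
  have hmp := (rotation (Circle.exp m)).measurePreserving
  have := hmp.measure_preimage (meas_polarRect a b (s+m) (t+m)).nullMeasurableSet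
  rw [← this]
  congr 1
  ext w
  simp only [mem_preimage, rotation_apply, Circle.coe_exp]
  constructor
  · rintro ⟨ρ, φ, h1, h2, h3, h4, h⟩
    refine ⟨ρ, φ - m, h1, h2, by linarith, by linarith, ?_⟩
    apply mul_left_cancel₀ (Complex.exp_ne_zero ((m : ℂ) * Complex.I))
    rw [h, mul_left_comm, ← Complex.exp_add]
    congr 2; push_cast; ring
  · rintro ⟨ρ, φ, h1, h2, h3, h4, rfl⟩
    refine ⟨ρ, φ + m, h1, h2, by linarith, by linarith, ?_⟩
    rw [mul_left_comm, ← Complex.exp_add]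
    congr 2; push_cast; ring

lemma dA_polarRect {a b s t : ℝ} (ha : 0 < a) (hab : a ≤ b) (hst : s ≤ t)
    (ht : t < s + 2 * Real.pi) :
    (dA (polarRect a b s t)).toReal = (b ^ 2 - a ^ 2) / 2 * (t - s) / Real.pi := by
  have h := vol_polarRect_rot a b (-(t-s)/2) ((t-s)/2) ((s+t)/2)
  rw [show -(t-s)/2 + (s+t)/2 = s by ring, show (t-s)/2 + (s+t)/2 = t by ring] at h
  rw [dA, Measure.smul_apply, smul_eq_mul, ENNReal.toReal_mul, h,
    vol_polarRect_aux ha hab (by linarith) (by linarith) (by linarith), ENNReal.toReal_inv,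
    ENNReal.toReal_ofReal Real.pi_pos.le]
  field_simp
  ring

/-- The rectangle `B(r e^{iθ})` for an arbitrary real angle. -/
def RR (r θ : ℝ) : Set ℂ := polarRect r (1 - (1 - r) / 2) θ (θ + Real.pi * (1 - r))

/-- The average over `RR`. -/
noncomputable def GG (f : ℂ → ℂ) (r θ : ℝ) : ℂ := avgOn f (RR r θ)

/-- Uniform smallness of the weak oscillation in polar form. -/
def HH (f : ℂ → ℂ) (ε r₀ : ℝ) : Prop :=
  ∀ r θ ρ φ : ℝ, r₀ ≤ r → r < 1 → r ≤ ρ → ρ ≤ 1 - (1 - r) / 2 → θ ≤ φ →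
    φ ≤ θ + Real.pi * (1 - r) →
    ‖∫ ξ in polarRect r ρ θ φ, (f ξ - GG f r θ) ∂dA‖ ≤ ε * (dA (RR r θ)).toReal

lemma arg_polar {r : ℝ} (hr : 0 < r) (θ : ℝ) :
    ∃ k : ℤ, Complex.arg ((r : ℂ) * Complex.exp ((θ : ℂ) * Complex.I)) = θ + k * (2 * Real.pi) := by
  set z := (r : ℂ) * Complex.exp ((θ : ℂ) * Complex.I) with hz
  have h1 := Complex.norm_mul_exp_arg_mul_I z
  have hn : ‖z‖ = r := norm_polar hr.le θ
  rw [hn] at h1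
  exact (polar_inj hr hr (h1.trans hz)).2

lemma theta_polar {r : ℝ} (hr : 0 < r) (θ : ℝ) :
    ∃ k : ℤ, theta ((r : ℂ) * Complex.exp ((θ : ℂ) * Complex.I)) = θ + k * (2 * Real.pi) := by
  obtain ⟨k, hk⟩ := arg_polar hr θ
  have := toIcoMod_add_toIcoDiv_zsmul Real.two_pi_pos 0
    (Complex.arg ((r : ℂ) * Complex.exp ((θ : ℂ) * Complex.I)))
  rw [hk] at this
  refine ⟨k - toIcoDiv Real.two_pi_pos 0 (θ + k * (2 * Real.pi)), ?_⟩
  rw [theta, hk]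
  rw [zsmul_eq_mul] at this
  push_cast
  linarith

lemma Bz_polar {r : ℝ} (hr : 0 < r) (θ : ℝ) :
    Bz ((r : ℂ) * Complex.exp ((θ : ℂ) * Complex.I)) = RR r θ := by
  obtain ⟨k, hk⟩ := theta_polar hr θ
  rw [Bz, RR, norm_polar hr.le, hk, add_right_comm, polarRect_shift]

lemma avg_polar (f : ℂ → ℂ) {r : ℝ} (hr : 0 < r) (θ : ℝ) :
    avg f ((r : ℂ) * Complex.exp ((θ : ℂ) * Complex.I)) = GG f r θ := by
  rw [avg, GG, Bz_polar hr]

lemma Bzz_polar {r ρ θ φ : ℝ} (hr : 0 < r) (hρ : 0 < ρ) (h1 : θ ≤ φ)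
    (h2 : φ < θ + 2 * Real.pi) :
    Bzz ((r : ℂ) * Complex.exp ((θ : ℂ) * Complex.I)) ((ρ : ℂ) * Complex.exp ((φ : ℂ) * Complex.I))
      = polarRect r ρ θ φ := by
  obtain ⟨k, hk⟩ := theta_polar hr θ
  obtain ⟨l, hl⟩ := arg_polar hρ φ
  have : angFrom ((r : ℂ) * Complex.exp ((θ : ℂ) * Complex.I))
      ((ρ : ℂ) * Complex.exp ((φ : ℂ) * Complex.I)) = φ + k * (2 * Real.pi) := by
    rw [angFrom, hk, hl, toIcoMod_eq_iff]
    refine ⟨⟨by linarith, by linarith⟩, l - k, ?_⟩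
    rw [zsmul_eq_mul]; push_cast; ring
  rw [Bzz, this, hk, norm_polar hr.le, norm_polar hρ.le, polarRect_shift]

lemma dA_RR {r : ℝ} (hr : 0 < r) (hr1 : r < 1) (θ : ℝ) :
    (dA (RR r θ)).toReal = ((1 - (1 - r) / 2) ^ 2 - r ^ 2) / 2 * (1 - r) := by
  have hp := Real.pi_pos
  rw [RR, dA_polarRect hr (by linarith) (by nlinarith) (by nlinarith)]
  field_simp
  ring

lemma HH_of_vwmo {f : ℂ → ℂ} (h : IsVWMO f) {ε : ℝ} (hε : 0 < ε) :
    ∃ r₀ < 1, 1 / 2 ≤ r₀ ∧ HH f ε r₀ := by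
  obtain ⟨r₀, h0, H⟩ := h ε hε
  refine ⟨max r₀ (1 / 2), max_lt h0 (by norm_num), le_max_right _ _, ?_⟩
  intro r θ ρ φ hr hr1 h1 h2 h3 h4
  have hr0 : r₀ ≤ r := (le_max_left _ _).trans hr
  have hr2 : 1 / 2 ≤ r := (le_max_right _ _).trans hr
  have hrpos : 0 < r := by linarith
  have hp := Real.pi_pos
  have hn := norm_polar hrpos.le θ
  have := H ((r : ℂ) * Complex.exp ((θ : ℂ) * Complex.I)) (by
    show ‖_‖ < 1
    rw [hn]; exact hr1) (by rw [hn]; exact hr0)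
    ((ρ : ℂ) * Complex.exp ((φ : ℂ) * Complex.I))
    (by rw [Bz_polar hrpos]; exact ⟨ρ, φ, h1, h2, h3, h4, rfl⟩)
  rw [wQuot, Bz_polar hrpos, avg_polar f hrpos,
    Bzz_polar hrpos (by linarith) h3 (by nlinarith)] at this
  have hpos : 0 < (dA (RR r θ)).toReal := by
    rw [dA_RR hrpos hr1]
    have : 0 < (1 - (1 - r) / 2) ^ 2 - r ^ 2 := by nlinarith
    have : 0 < 1 - r := by linarith
    positivity
  rwa [inv_mul_le_iff₀ hpos, mul_comm] at this

lemma dA_lt_top (a b s t : ℝ) : dA (polarRect a b s t) < ⊤ := by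
  rw [dA, Measure.smul_apply, smul_eq_mul]
  apply ENNReal.mul_lt_top
  · simp [Real.pi_pos]
  · exact (isCompact_polarRect a b s t).measure_lt_top

lemma integrableOn_polar {f : ℂ → ℂ} (hf : LocallyIntegrableOn f unitDisc dA) {a b : ℝ}
    (ha : 0 ≤ a) (hb : b < 1) (s t : ℝ) : IntegrableOn f (polarRect a b s t) dA := by
  apply hf.integrableOn_compact_subset _ (isCompact_polarRect a b s t)
  rintro w ⟨ρ, φ, h1, h2, h3, h4, rfl⟩
  show ‖_‖ < 1
  rw [norm_polar (by linarith)]; linarith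

lemma integrableOn_polar_sub {f : ℂ → ℂ} (hf : LocallyIntegrableOn f unitDisc dA) {a b : ℝ}
    (ha : 0 ≤ a) (hb : b < 1) (s t : ℝ) (c : ℂ) :
    IntegrableOn (fun w => f w - c) (polarRect a b s t) dA :=
  (integrableOn_polar hf ha hb s t).sub (integrableOn_const (dA_lt_top a b s t).ne)

lemma subrect_bound {f : ℂ → ℂ} (hf : LocallyIntegrableOn f unitDisc dA) {ε r₀ : ℝ}
    (h0 : 1 / 2 ≤ r₀) (H : HH f ε r₀) {r θ a b s t : ℝ} (hr : r₀ ≤ r) (hr1 : r < 1)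
    (ha : r ≤ a) (hab : a ≤ b) (hb : b ≤ 1 - (1 - r) / 2) (hs : θ ≤ s) (hst : s ≤ t)
    (ht : t ≤ θ + Real.pi * (1 - r)) :
    ‖∫ ξ in polarRect a b s t, (f ξ - GG f r θ) ∂dA‖ ≤ 4 * (ε * (dA (RR r θ)).toReal) := by
  have hp := Real.pi_pos
  have hpr : Real.pi * (1 - r) < 2 * Real.pi := by nlinarith
  have hi : ∀ a b s t, 0 ≤ a → b < 1 → IntegrableOn (fun w => f w - GG f r θ)
    (polarRect a b s t) dA := fun a b s t ha hb => integrableOn_polar_sub hf ha hb s t _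
  have e1 := int_radial (g := fun w => f w - GG f r θ) (s := s) (t := t) (by linarith) ha hab
    (hi _ _ _ _ (by linarith) (by linarith))
  have e2 := int_ang (g := fun w => f w - GG f r θ) (a := r) (b := b) (by linarith) hs hst
    (by linarith) (hi _ _ _ _ (by linarith) (by linarith))
  have e3 := int_ang (g := fun w => f w - GG f r θ) (a := r) (b := a) (by linarith) hs hst
    (by linarith) (hi _ _ _ _ (by linarith) (by linarith))
  have b1 := H r θ b t hr hr1 (by linarith) hb (by linarith) ht
  have b2 := H r θ b s hr hr1 (by linarith) hb (by linarith) (by linarith)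
  have b3 := H r θ a t hr hr1 (by linarith) (by linarith) (by linarith) ht
  have b4 := H r θ a s hr hr1 (by linarith) (by linarith) (by linarith) (by linarith)
  generalize (∫ ξ in polarRect a b s t, (f ξ - GG f r θ) ∂dA) = I at *
  generalize (∫ ξ in polarRect r b s t, (f ξ - GG f r θ) ∂dA) = I1 at *
  generalize (∫ ξ in polarRect r a s t, (f ξ - GG f r θ) ∂dA) = I2 at *
  generalize (∫ ξ in polarRect r b θ t, (f ξ - GG f r θ) ∂dA) = J1 at *
  generalize (∫ ξ in polarRect r b θ s, (f ξ - GG f r θ) ∂dA) = J2 at *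
  generalize (∫ ξ in polarRect r a θ t, (f ξ - GG f r θ) ∂dA) = J3 at *
  generalize (∫ ξ in polarRect r a θ s, (f ξ - GG f r θ) ∂dA) = J4 at *
  have e : I = (J1 - J2) - (J3 - J4) := by
    rw [e2, e3, e1]; ring
  rw [e]
  have n1 := norm_sub_le (J1 - J2) (J3 - J4)
  have n2 := norm_sub_le J1 J2
  have n3 := norm_sub_le J3 J4
  linarith

lemma area_upper {r : ℝ} (_h0 : 1 / 2 ≤ r) (h1 : r < 1) :
    ((1 - (1 - r) / 2) ^ 2 - r ^ 2) / 2 * (1 - r) ≤ (1 - r) ^ 2 / 2 := by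
  have h : (1 - (1 - r) / 2) ^ 2 - r ^ 2 ≤ 1 - r := by nlinarith
  have := mul_le_mul_of_nonneg_right h (by linarith : 0 ≤ 1 - r)
  linarith

lemma area_lower {r r' : ℝ} (h0 : 1 / 2 ≤ r) (h1 : r ≤ r')
    (h2 : 3 / 4 * (1 - r) ≤ 1 - r') :
    (1 - r) ^ 2 / 16 ≤ ((1 - (1 - r) / 2) ^ 2 - r' ^ 2) * (1 - r) / 4 := by
  have hd : 0 ≤ 1 - r := by linarith
  have h : (1 - r) / 4 * 1 ≤ (1 - (1 - r) / 2 - r') * (1 - (1 - r) / 2 + r') :=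
    mul_le_mul (by linarith) (by linarith) zero_le_one (by linarith)
  have := mul_le_mul_of_nonneg_right h hd
  nlinarith

lemma step {f : ℂ → ℂ} (hf : LocallyIntegrableOn f unitDisc dA) {ε r₀ : ℝ} (hε : 0 < ε)
    (h0 : 1 / 2 ≤ r₀) (H : HH f ε r₀) {r r' θ θ' : ℝ} (hr : r₀ ≤ r) (hr1 : r < 1)
    (h1 : r ≤ r') (h2 : 3 / 4 * (1 - r) ≤ 1 - r') (h3 : θ ≤ θ')
    (h4 : θ' ≤ θ + Real.pi * (1 - r) / 2) :
    ‖GG f r θ - GG f r' θ'‖ ≤ 64 * ε := by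
  have hp := Real.pi_pos
  have hpd : 0 < Real.pi * (1 - r) := mul_pos hp (by linarith)
  have hpd' : 3 / 4 * (Real.pi * (1 - r)) ≤ Real.pi * (1 - r') := by nlinarith
  have hb : 1 - (1 - r) / 2 < 1 := by linarith
  set b := 1 - (1 - r) / 2 with hbdef
  set t := θ' + Real.pi * (1 - r) / 2 with htdef
  have B1 := subrect_bound hf h0 H (r := r) (θ := θ) (a := r') (b := b) (s := θ') (t := t)
    hr hr1 h1 (by linarith) le_rfl h3 (by linarith) (by linarith)
  have B2 := subrect_bound hf h0 H (r := r') (θ := θ') (a := r') (b := b) (s := θ') (t := t)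
    (by linarith) (by linarith) le_rfl (by linarith) (by linarith) le_rfl (by linarith)
    (by linarith)
  rw [dA_RR (by linarith) hr1] at B1
  rw [dA_RR (by linarith) (by linarith)] at B2
  have hm := dA_polarRect (a := r') (b := b) (s := θ') (t := t) (by linarith) (by linarith)
    (by linarith) (by nlinarith)
  have i1 := integrableOn_polar_sub hf (a := r') (b := b) (by linarith) hb θ' t (GG f r θ)
  have i2 := integrableOn_polar_sub hf (a := r') (b := b) (by linarith) hb θ' t (GG f r' θ')
  have hI := integral_sub i2 i1
  simp only [sub_sub_sub_cancel_left] at hI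
  rw [setIntegral_const] at hI
  have hN := norm_sub_le (∫ ξ in polarRect r' b θ' t, (f ξ - GG f r' θ') ∂dA)
    (∫ ξ in polarRect r' b θ' t, (f ξ - GG f r θ) ∂dA)
  rw [← hI, norm_smul, measureReal_def, hm, Real.norm_eq_abs] at hN
  set N := ‖GG f r θ - GG f r' θ'‖
  have hN0 : 0 ≤ N := norm_nonneg _
  have key : (b ^ 2 - r' ^ 2) / 2 * (t - θ') / Real.pi = (b ^ 2 - r' ^ 2) * (1 - r) / 4 := by
    rw [htdef]; field_simp; ring
  rw [key] at hN
  have l1 := area_lower (r := r) (r' := r') (by linarith) h1 h2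
  have u1 := area_upper (r := r) (by linarith) hr1
  have u2 := area_upper (r := r') (by linarith) (by linarith)
  have u3 : (1 - r') ^ 2 / 2 ≤ (1 - r) ^ 2 / 2 := by
    have := pow_le_pow_left₀ (by linarith : 0 ≤ 1 - r') (by linarith : 1 - r' ≤ 1 - r) 2
    linarith
  replace u2 := u2.trans u3
  rw [← hbdef] at l1 u1 B1
  have hdpos : 0 < 1 - r := by linarith
  clear_value b t N
  generalize 1 - r = d at *
  have e1 := mul_le_mul_of_nonneg_left u1 hε.le
  have e2 := mul_le_mul_of_nonneg_left u2 hε.le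
  have e3 : d ^ 2 / 16 * N ≤ 4 * (ε * d ^ 2) := by
    have := mul_le_mul_of_nonneg_right (l1.trans (le_abs_self _)) hN0
    linarith
  have hd2 : 0 < d ^ 2 := by positivity
  have e4 : d ^ 2 * N ≤ d ^ 2 * (64 * ε) := by linarith
  exact le_of_mul_le_mul_left e4 hd2

lemma chain_rad {f : ℂ → ℂ} (hf : LocallyIntegrableOn f unitDisc dA) {ε r₀ : ℝ} (hε : 0 < ε)
    (h0 : 1 / 2 ≤ r₀) (H : HH f ε r₀) (n : ℕ) (θ r' : ℝ) (hr1' : r' < 1) : ∀ r, r₀ ≤ r → r ≤ r' →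
    (3 / 4) ^ n * (1 - r) ≤ 1 - r' → ‖GG f r θ - GG f r' θ‖ ≤ n * (64 * ε) := by
  induction n with
  | zero =>
    intro r hr h1 h2
    have : r = r' := by simp at h2; linarith
    subst this
    simp
  | succ n ih =>
    intro r hr h1 h2
    have hpd : 0 < Real.pi * (1 - r) := mul_pos Real.pi_pos (by linarith)
    by_cases hc : 3 / 4 * (1 - r) ≤ 1 - r'
    · have s := step hf hε h0 H (θ := θ) (θ' := θ) hr (by linarith) h1 hc le_rfl (by linarith)
      push_cast
      have : 0 ≤ (n : ℝ) * (64 * ε) := by positivity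
      linarith
    · push Not at hc
      have s := step hf hε h0 H (θ := θ) (θ' := θ) (r := r) (r' := 1 - 3 / 4 * (1 - r)) hr
        (by linarith) (by linarith) (by linarith) le_rfl (by linarith)
      have i := ih (1 - 3 / 4 * (1 - r)) (by linarith) (by linarith)
        (by rw [pow_succ] at h2; linarith)
      have := norm_sub_le_norm_sub_add_norm_sub (GG f r θ) (GG f (1 - 3 / 4 * (1 - r)) θ) (GG f r' θ)
      push_cast
      linarith

lemma chain_ang {f : ℂ → ℂ} (hf : LocallyIntegrableOn f unitDisc dA) {ε r₀ : ℝ} (hε : 0 < ε)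
    (h0 : 1 / 2 ≤ r₀) (H : HH f ε r₀) (n : ℕ) (r θ' : ℝ) (hr : r₀ ≤ r) (hr1 : r < 1) :
    ∀ θ, θ ≤ θ' → θ' ≤ θ + n * (Real.pi * (1 - r) / 2) →
    ‖GG f r θ - GG f r θ'‖ ≤ n * (64 * ε) := by
  have hpd : 0 < Real.pi * (1 - r) := mul_pos Real.pi_pos (by linarith)
  induction n with
  | zero =>
    intro θ h1 h2
    have : θ = θ' := by simp at h2; linarith
    subst this
    simp
  | succ n ih =>
    intro θ h1 h2
    push_cast at h2 ⊢
    by_cases hc : θ' ≤ θ + Real.pi * (1 - r) / 2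
    · have s := step hf hε h0 H (θ := θ) (θ' := θ') hr hr1 le_rfl (by linarith) h1 hc
      have : 0 ≤ (n : ℝ) * (64 * ε) := by positivity
      linarith
    · push Not at hc
      have s := step hf hε h0 H (θ := θ) (θ' := θ + Real.pi * (1 - r) / 2) hr hr1 le_rfl
        (by linarith) (by linarith) le_rfl
      have i := ih (θ + Real.pi * (1 - r) / 2) (by linarith) (by linarith)
      have := norm_sub_le_norm_sub_add_norm_sub (GG f r θ) (GG f r (θ + Real.pi * (1 - r) / 2))
        (GG f r θ')
      linarith

lemma chain_ang' {f : ℂ → ℂ} (hf : LocallyIntegrableOn f unitDisc dA) {ε r₀ : ℝ} (hε : 0 < ε)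
    (h0 : 1 / 2 ≤ r₀) (H : HH f ε r₀) (n : ℕ) (r θ θ' : ℝ) (hr : r₀ ≤ r) (hr1 : r < 1)
    (h : |θ' - θ| ≤ n * (Real.pi * (1 - r) / 2)) :
    ‖GG f r θ - GG f r θ'‖ ≤ n * (64 * ε) := by
  rw [abs_le] at h
  rcases le_total θ θ' with hl | hl
  · exact chain_ang hf hε h0 H n r θ' hr hr1 θ hl (by linarith)
  · rw [norm_sub_rev]
    exact chain_ang hf hε h0 H n r θ hr hr1 θ' hl (by linarith)

/-- The comparison constant. -/
noncomputable def KK : ℝ := 2 * Real.tanh 1 / (1 - Real.tanh 1)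

lemma KK_nonneg : 0 ≤ KK := by
  have h1 := Real.tanh_lt_one 1
  have h0 : 0 ≤ Real.tanh 1 := by
    rw [Real.tanh_eq_sinh_div_cosh]
    exact div_nonneg (Real.sinh_nonneg_iff.2 zero_le_one) (Real.cosh_pos _).le
  exact div_nonneg (by linarith) (by linarith)

lemma Dball_symm {z w : ℂ} (hz : ‖z‖ < 1) (h : w ∈ Dball z) : z ∈ Dball w := by
  refine ⟨hz, ?_⟩
  have h2 := h.2
  rw [norm_div] at h2 ⊢
  rw [norm_sub_rev w z]
  have : 1 - (starRingEnd ℂ) z * w = (starRingEnd ℂ) (1 - (starRingEnd ℂ) w * z) := by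
    simp [mul_comm]
  rw [this, RCLike.norm_conj]
  exact h2

lemma Dball_dist {z w : ℂ} (hz : ‖z‖ < 1) (h : w ∈ Dball z) : ‖z - w‖ ≤ KK * (1 - ‖z‖) := by
  obtain ⟨hw, h⟩ := h
  have h1 := Real.tanh_lt_one 1
  have ht : 0 < Real.tanh 1 := lt_of_le_of_lt (norm_nonneg _) h
  set τ := Real.tanh 1 with hτ
  have hne : 0 < ‖1 - (starRingEnd ℂ) w * z‖ := by
    rw [norm_pos_iff]
    intro he
    have : ‖(starRingEnd ℂ) w * z‖ = 1 := by
      rw [← sub_eq_zero.1 he]; simp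
    rw [norm_mul, RCLike.norm_conj] at this
    nlinarith [norm_nonneg z, norm_nonneg w]
  rw [norm_div, div_lt_iff₀ hne] at h
  have e : 1 - (starRingEnd ℂ) w * z = ((1 - ‖z‖ ^ 2 : ℝ) : ℂ) + (starRingEnd ℂ) (z - w) * z := by
    have := Complex.conj_mul' z
    push_cast
    rw [← this, map_sub]; ring
  have hb : ‖1 - (starRingEnd ℂ) w * z‖ ≤ (1 - ‖z‖ ^ 2) + ‖z - w‖ := by
    rw [e]
    refine (norm_add_le _ _).trans ?_
    rw [Complex.norm_real, Real.norm_of_nonneg (by nlinarith [norm_nonneg z]), norm_mul,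
      RCLike.norm_conj]
    nlinarith [norm_nonneg (z - w), norm_nonneg z]
  rw [KK, ← hτ, div_mul_eq_mul_div, le_div_iff₀ (by linarith)]
  have h5 := mul_le_mul_of_nonneg_left hb ht.le
  have h6 : τ * (1 - ‖z‖ ^ 2) ≤ τ * (2 * (1 - ‖z‖)) := by
    apply mul_le_mul_of_nonneg_left _ ht.le
    nlinarith [norm_nonneg z]
  linarith

lemma arg_bound {z w : ℂ} (hz : 1 / 2 ≤ ‖z‖) (hw : w ≠ 0) :
    |Complex.arg (w / z)| ≤ 2 * Real.pi * ‖z - w‖ := by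
  have hzp : 0 < ‖z‖ := by linarith
  have hwp : 0 < ‖w‖ := norm_pos_iff.2 hw
  have hz0 : z ≠ 0 := norm_pos_iff.1 hzp
  set u : ℂ := w / (‖w‖ : ℂ)
  set v : ℂ := z / (‖z‖ : ℂ)
  have hu : ‖u‖ = 1 := by simp [u, hwp.ne']
  have hv : ‖v‖ = 1 := by simp [v, hzp.ne']
  have h := Complex.angle_le_mul_norm_sub hu hv
  have hu0 : u ≠ 0 := by intro h; simp [h] at hu
  have hv0 : v ≠ 0 := by intro h; simp [h] at hv
  rw [Complex.angle_eq_abs_arg hu0 hv0] at h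
  have huv : u / v = ((‖z‖ / ‖w‖ : ℝ) : ℂ) * (w / z) := by
    simp only [u, v]; push_cast; field_simp
  rw [huv, Complex.arg_real_mul _ (by positivity)] at h
  have hd : ‖u - v‖ ≤ 4 * ‖z - w‖ := by
    have e : (‖z‖ : ℂ) * (u - v) = (w - z) + u * ((‖z‖ - ‖w‖ : ℝ) : ℂ) := by
      have hw' : (‖w‖ : ℂ) ≠ 0 := by exact_mod_cast hwp.ne'
      have hz' : (‖z‖ : ℂ) ≠ 0 := by exact_mod_cast hzp.ne'
      simp only [u, v]; push_cast; field_simp; ring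
    have e2 := congrArg norm e
    rw [norm_mul, Complex.norm_real, Real.norm_of_nonneg hzp.le] at e2
    have e3 := norm_add_le (w - z) (u * ((‖z‖ - ‖w‖ : ℝ) : ℂ))
    rw [norm_mul, hu, one_mul, Complex.norm_real, norm_sub_rev w z, Real.norm_eq_abs] at e3
    have e4 := abs_norm_sub_norm_le z w
    nlinarith [norm_nonneg (u - v)]
  have hp := Real.pi_pos
  nlinarith

lemma main_half {f : ℂ → ℂ} (hf : LocallyIntegrableOn f unitDisc dA) {ε r₀ : ℝ} (hε : 0 < ε)
    (h0 : 1 / 2 ≤ r₀) (H : HH f ε r₀) {n m : ℕ} (hn : (3 / 4) ^ n * (1 + KK) ≤ 1)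
    (hm : 4 * KK ≤ m) {z w : ℂ} (hz : ‖z‖ < 1) (hzr : r₀ ≤ ‖z‖) (hzw : ‖z‖ ≤ ‖w‖)
    (h : w ∈ Dball z) : ‖avg f z - avg f w‖ ≤ (m + n) * (64 * ε) := by
  have hw : ‖w‖ < 1 := h.1
  have hd := Dball_dist hz h
  have hd' := Dball_dist hw (Dball_symm hz h)
  have hzp : 0 < ‖z‖ := by linarith
  have hwp : 0 < ‖w‖ := by linarith
  have hz0 : z ≠ 0 := norm_pos_iff.1 hzp
  have hw0 : w ≠ 0 := norm_pos_iff.1 hwp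
  set α := Complex.arg z
  set β := α + Complex.arg (w / z)
  have ez : (‖z‖ : ℂ) * Complex.exp ((α : ℂ) * Complex.I) = z := Complex.norm_mul_exp_arg_mul_I z
  have ew : (‖w‖ : ℂ) * Complex.exp ((β : ℂ) * Complex.I) = w := by
    have h1 := Complex.norm_mul_exp_arg_mul_I (w / z)
    have hz' : (‖z‖ : ℂ) ≠ 0 := by exact_mod_cast hzp.ne'
    have hs : (‖w / z‖ : ℂ) * (‖z‖ : ℂ) = (‖w‖ : ℂ) := by
      rw [norm_div]; push_cast; field_simp
    calc _ = ((‖w / z‖ : ℂ) * Complex.exp ((Complex.arg (w / z) : ℂ) * Complex.I)) *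
            ((‖z‖ : ℂ) * Complex.exp ((α : ℂ) * Complex.I)) := by
          rw [← hs]
          simp only [β]; push_cast
          rw [add_mul, Complex.exp_add]; ring
      _ = w := by rw [h1, ez]; field_simp
  have az : avg f z = GG f ‖z‖ α := by rw [← avg_polar f hzp α, ez]
  have aw : avg f w = GG f ‖w‖ β := by rw [← avg_polar f hwp β, ew]
  rw [az, aw]
  have hp := Real.pi_pos
  have c1 := chain_ang' hf hε h0 H m ‖z‖ α β hzr hz (by
    have hb := arg_bound (by linarith : 1 / 2 ≤ ‖z‖) hw0
    have e : β - α = Complex.arg (w / z) := by simp [β]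
    rw [e]
    refine hb.trans ?_
    have h1 := mul_le_mul_of_nonneg_left hd (by positivity : 0 ≤ 2 * Real.pi)
    have h2 := mul_le_mul_of_nonneg_right hm
      (by have : 0 < 1 - ‖z‖ := by linarith
          positivity : 0 ≤ Real.pi * (1 - ‖z‖) / 2)
    linarith)
  have c2 := chain_rad hf hε h0 H n β ‖w‖ hw ‖z‖ hzr hzw (by
    have h3 := norm_sub_norm_le w z
    have h4 : 1 - ‖z‖ ≤ (1 + KK) * (1 - ‖w‖) := by linarith
    have h5 := mul_le_mul_of_nonneg_left h4 (by positivity : (0:ℝ) ≤ (3 / 4) ^ n)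
    have h6 := mul_le_mul_of_nonneg_right hn (by linarith : 0 ≤ 1 - ‖w‖)
    linarith)
  have := norm_sub_le_norm_sub_add_norm_sub (GG f ‖z‖ α) (GG f ‖z‖ β) (GG f ‖w‖ β)
  linarith

end VWMOproof

/-- If a locally integrable `f` on `𝔻` satisfies the VWMO condition, then
the average function `f̂` is of vanishing oscillation:
`sup_{w∈D(z,1)} |f̂(z) - f̂(w)| → 0` as `|z| → 1`. -/
theorem vwmo_avg_mem_VO (f : ℂ → ℂ) (hf : MeasureTheory.LocallyIntegrableOn f unitDisc dA)
    (hvwmo : IsVWMO f) :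
    ∀ ε > (0:ℝ), ∃ r₀ < (1:ℝ), ∀ z ∈ unitDisc, r₀ ≤ ‖z‖ →
      ∀ w ∈ Dball z, ‖avg f z - avg f w‖ ≤ ε := by
  intro ε hε
  have hK := KK_nonneg
  obtain ⟨m, hm⟩ := exists_nat_ge (4 * KK)
  obtain ⟨n, hn⟩ : ∃ n : ℕ, ((3:ℝ) / 4) ^ n * (1 + KK) ≤ 1 := by
    obtain ⟨n, hn⟩ := exists_pow_lt_of_lt_one (by positivity : 0 < (1 + KK)⁻¹)
      (by norm_num : (3:ℝ) / 4 < 1)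
    refine ⟨n, ?_⟩
    rw [← le_div_iff₀ (by positivity), one_div]
    exact hn.le
  set ε' := ε / (((m:ℝ) + n + 1) * 64) with hε'
  have hε'0 : 0 < ε' := by positivity
  have hle : ((m:ℝ) + n) * (64 * ε') ≤ ε := by
    have : ((m:ℝ) + n + 1) * (64 * ε') = ε := by rw [hε']; field_simp
    linarith
  obtain ⟨r₀, h1, h0, H⟩ := HH_of_vwmo hvwmo hε'0
  have hL : 0 < 1 + KK := by positivity
  refine ⟨1 - (1 - r₀) / (1 + KK), ?_, ?_⟩
  · have : 0 < (1 - r₀) / (1 + KK) := div_pos (by linarith) hL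
    linarith
  intro z hz hzr w hw
  have hz1 : ‖z‖ < 1 := hz
  have hw1 : ‖w‖ < 1 := hw.1
  have hq : 1 - ‖z‖ ≤ (1 - r₀) / (1 + KK) := by linarith
  rw [le_div_iff₀ hL] at hq
  have hzr0 : r₀ ≤ ‖z‖ := by nlinarith
  have hwr0 : r₀ ≤ ‖w‖ := by
    have := Dball_dist hz1 hw
    have := norm_sub_norm_le z w
    nlinarith
  rcases le_total ‖z‖ ‖w‖ with h | h
  · exact (main_half hf hε'0 h0 H hn hm hz1 hzr0 h hw).trans hle
  · rw [norm_sub_rev]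
    exact (main_half hf hε'0 h0 H hn hm hw1 hwr0 h (Dball_symm hz1 hw)).trans hle
end
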